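/- arXiv:1510.01557 — 9 statements merged into one kernel-verified Lean document; each statement's English description precedes it below -/
import Mathlib

section
/- Let G = (V, E_1, …, E_α) be an α-edge-colored graph, let i ∈ {1, …, α}, and let v be a vertex having exactly one neighbor u in the color-i graph G_i. Let G' be the α-edge-colored graph obtained from G by deleting the edge (v,u) from E_i, all other color classes being unchanged. Then for every nonnegative integer k, G has an α-simultaneous feedback vertex set of size at most k if and only if G' has an α-simultaneous feedback vertex set of size at most k. (Safeness of reduction rule α-SimFVS.R2.) -/
open SimpleGraph

/-- A set `S` of vertices is an α-simultaneous feedback vertex set of the α-edge-colored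
graph `G = (V, E_1, …, E_α)` if deleting `S` from every color graph leaves an acyclic graph. -/
def IsSimFVS {V : Type*} {α : ℕ} (G : Fin α → SimpleGraph V) (S : Set V) : Prop :=
  ∀ i, ((G i).induce Sᶜ).IsAcyclic

/-!
The only edge at a vertex of degree one is a bridge. Bridges lie on no cycle and remain bridges
in every induced subgraph, so deleting them from a color class leaves the simultaneous feedback
vertex sets themselves unchanged, not only their minimum size.
-/

section Bridges

variable {V W : Type*} {G : SimpleGraph V}

theorem isBridge_of_neighborSet_eq_singleton {v u : V} (h : G.neighborSet v = {u}) :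
    G.IsBridge s(v, u) := by
  have hvu : G.Adj v u := h.ge rfl
  rw [isBridge_iff_forall_walk_mem_edges]
  rintro (_ | ⟨hvw, q⟩)
  · exact absurd hvu G.irrefl
  · obtain rfl := h.le hvw
    exact q.edges.mem_cons_self

theorem isBridge_of_isBridge_map {H : SimpleGraph W} (f : H →g G) (hf : Function.Injective f)
    {e : Sym2 W} (he : G.IsBridge (e.map f)) : H.IsBridge e := by
  obtain ⟨a, b⟩ := e
  refine isBridge_iff_forall_walk_mem_edges.mpr fun p ↦ ?_
  have hmap : s(f a, f b) ∈ (p.map f).edges := isBridge_iff_forall_walk_mem_edges.mp he (p.map f)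
  rw [Walk.edges_map] at hmap
  exact (List.mem_map_of_injective (Sym2.map.injective hf)).mp hmap

theorem isAcyclic_deleteEdges_iff {B : Set (Sym2 V)} (hB : ∀ e ∈ B, G.IsBridge e) :
    (G.deleteEdges B).IsAcyclic ↔ G.IsAcyclic := by
  refine ⟨fun hacyclic v c hc ↦ ?_, fun hacyclic ↦ hacyclic.anti (G.deleteEdges_le B)⟩
  have havoid : ∀ e ∈ c.edges, e ∉ B := fun e hec heB ↦
    (hB e heB).notMem_edges_of_isCycle hc hec
  exact hacyclic (c.toDeleteEdges B havoid) (hc.toDeleteEdges _ B havoid)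

theorem comap_deleteEdges (f : W → V) (B : Set (Sym2 V)) :
    (G.deleteEdges B).comap f = (G.comap f).deleteEdges (Sym2.map f ⁻¹' B) := by
  ext a b
  simp only [comap_adj, deleteEdges_adj, Set.mem_preimage, Sym2.map_mk]

theorem isAcyclic_comap_deleteEdges_iff {f : W → V} (hf : Function.Injective f)
    {B : Set (Sym2 V)} (hB : ∀ e ∈ B, G.IsBridge e) :
    ((G.deleteEdges B).comap f).IsAcyclic ↔ (G.comap f).IsAcyclic := by
  rw [comap_deleteEdges]
  exact isAcyclic_deleteEdges_iff fun e he ↦ isBridge_of_isBridge_map ⟨f, id⟩ hf (hB _ he)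

end Bridges

theorem isSimFVS_update_deleteEdges_iff {V : Type*} {α : ℕ} {G : Fin α → SimpleGraph V}
    {i : Fin α} {B : Set (Sym2 V)} (hB : ∀ e ∈ B, (G i).IsBridge e) (S : Set V) :
    IsSimFVS (Function.update G i ((G i).deleteEdges B)) S ↔ IsSimFVS G S := by
  refine forall_congr' fun j ↦ ?_
  obtain rfl | hji := eq_or_ne j i
  · rw [Function.update_self]
    exact isAcyclic_comap_deleteEdges_iff Subtype.val_injective hB
  · rw [Function.update_of_ne hji]

theorem alphaSimFVS_R2_safe_general {V : Type*} {α : ℕ} (G : Fin α → SimpleGraph V) (i : Fin α)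
    {B : Set (Sym2 V)} (hB : ∀ e ∈ B, (G i).IsBridge e) (k : ℕ) :
    (∃ S : Finset V, S.card ≤ k ∧ IsSimFVS G ↑S) ↔
    (∃ S : Finset V, S.card ≤ k ∧
      IsSimFVS (Function.update G i ((G i).deleteEdges B)) ↑S) :=
  exists_congr fun S ↦ and_congr_right fun _ ↦ (isSimFVS_update_deleteEdges_iff hB S).symm

/-- Safeness of reduction rule α-SimFVS.R2: if `v` has exactly one neighbor `u` in the
color-`i` graph `G i`, then deleting the edge `(v, u)` from color class `i` preserves the
existence of an α-simultaneous feedback vertex set of size at most `k`. -/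
theorem alphaSimFVS_R2_safe {V : Type*} [Fintype V] [DecidableEq V] {α : ℕ}
    (G : Fin α → SimpleGraph V) (i : Fin α) (v u : V)
    (h : (G i).neighborSet v = {u}) (k : ℕ) :
    (∃ S : Finset V, S.card ≤ k ∧ IsSimFVS G ↑S) ↔
    (∃ S : Finset V, S.card ≤ k ∧
      IsSimFVS (Function.update G i ((G i).deleteEdges {s(v, u)})) ↑S) := by
  have hvu : (G i).IsBridge s(v, u) := isBridge_of_neighborSet_eq_singleton h
  exact alphaSimFVS_R2_safe_general G i (by rintro _ rfl; exact hvu) k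
end

section
/- Let G = (V, E_1, …, E_α) be an α-edge-colored graph and let v be a vertex of total degree 2 whose both edges lie in the color-i graph G_i: v has exactly two distinct neighbors u and w, both adjacent to v in G_i, and v has degree 0 in every other color class. Assume moreover that u and w are not adjacent in G_i. Let G' be the α-edge-colored graph obtained from G by deleting the edges (v,u) and (v,w) from E_i and adding the edge (u,w) to E_i. Then for every nonnegative integer k, G has an α-simultaneous feedback vertex set of size at most k if and only if G' has an α-simultaneous feedback vertex set of size at most k. (Safeness of reduction rule α-SimFVS.R3 in the simple-graph setting; the nonadjacency of u and w replaces the paper's use of double edges.) -/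
open SimpleGraph

/-!
Let `H` be the color-`i` graph with the two edges at `v` removed. Since `v` is isolated in `H`,
a path from `v` to `w` in `H + vu` is the edge `vu` followed by a path of `H` from `u` to `w`.
Hence the edge `vw` closes a cycle in `H + vu` exactly when the edge `uw` closes one in `H`.
So a set avoiding `v` hits all cycles of one graph iff it hits all cycles of the other; and a set
containing `v` may trade `v` for `u`, because every cycle created by the rule uses the edge `uw`.
-/

section Acyclic

variable {V : Type*} {G H K : SimpleGraph V} {a b u v w : V} {s : Set V}

theorem isAcyclic_induce_iff_of_support_subset (hs : G.support ⊆ s) :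
    (G.induce s).IsAcyclic ↔ G.IsAcyclic := by
  refine ⟨fun h x c hc ↦ ?_, fun h ↦ h.induce s⟩
  have hcs : ∀ y ∈ c.support, y ∈ s := fun y hy ↦
    hs (mem_support_of_mem_walk_support c hc.not_nil hy)
  refine h (c.induce s hcs) (Walk.IsCycle.of_map (f := (Embedding.induce s).toHom) ?_)
  rwa [Walk.map_induce]

theorem isAcyclic_spanningCoe_iff {G : SimpleGraph s} :
    G.spanningCoe.IsAcyclic ↔ G.IsAcyclic := by
  have hs : G.spanningCoe.support ⊆ s := by
    rw [support_spanningCoe]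
    exact Subtype.coe_image_subset s G.support
  rw [← isAcyclic_induce_iff_of_support_subset hs, induce_spanningCoe]

theorem ne_and_ne_of_adj_of_isIsolated (hv : G.IsIsolated v) (hab : G.Adj a b) :
    a ≠ v ∧ b ≠ v :=
  ⟨fun h ↦ hv b (h ▸ hab), fun h ↦ hv a (h ▸ hab.symm)⟩

theorem isAcyclic_induce_insert_sdiff (hv : K.IsIsolated v) (hle : K.deleteIncidenceSet u ≤ G)
    (hG : (G.induce sᶜ).IsAcyclic) : (K.induce (insert u (s \ {v}))ᶜ).IsAcyclic := by
  refine isAcyclic_spanningCoe_iff.1 ((isAcyclic_spanningCoe_iff.2 hG).anti fun a b hab ↦ ?_)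
  obtain ⟨hne, ⟨a, ha⟩, ⟨b, hb⟩, hab, rfl, rfl⟩ := hab
  obtain ⟨hav, hbv⟩ : a ≠ v ∧ b ≠ v := ne_and_ne_of_adj_of_isIsolated hv hab
  simp only [Set.mem_compl_iff, Set.mem_insert_iff, Set.mem_sdiff, Set.mem_singleton_iff, hav, hbv,
    not_false_eq_true, and_true, not_or] at ha hb
  exact ⟨hne, ⟨a, ha.2⟩, ⟨b, hb.2⟩, hle (deleteIncidenceSet_adj.2 ⟨hab, ha.1, hb.1⟩), rfl, rfl⟩

theorem isAcyclic_sup_edge_iff_of_isIsolated (hv : H.IsIsolated v) :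
    (H ⊔ edge v w).IsAcyclic ↔ H.IsAcyclic := by
  obtain rfl | hvw := eq_or_ne v w
  · rw [sup_edge_self]
  · exact isAcyclic_add_edge_iff_of_not_reachable v w
      (not_reachable_of_neighborSet_left_eq_empty hvw hv.neighborSet_eq_empty)

theorem reachable_sup_edge_iff_of_isIsolated (hv : H.IsIsolated v) (hvu : v ≠ u) (hvw : v ≠ w) :
    (H ⊔ edge v u).Reachable v w ↔ H.Reachable u w := by
  classical
  have hadj : (H ⊔ edge v u).Adj v u := Or.inr ((edge_adj v u v u).2 ⟨Or.inl ⟨rfl, rfl⟩, hvu⟩)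
  refine ⟨fun h ↦ ?_, fun h ↦ hadj.reachable.trans (h.mono le_sup_left)⟩
  -- Contracting the edge `vu` turns walks of `H + vu` into walks of `H`.
  let contract : V → V := Function.update id v u
  have contract_adj : ∀ a b, (H ⊔ edge v u).Adj a b →
      Relation.ReflTransGen H.Adj (contract a) (contract b) := by
    rintro a b (hab | hab)
    · obtain ⟨hav, hbv⟩ := ne_and_ne_of_adj_of_isIsolated hv hab
      simpa [contract, hav, hbv] using Relation.ReflTransGen.single hab
    · obtain ⟨⟨rfl, rfl⟩ | ⟨rfl, rfl⟩, -⟩ := (edge_adj _ _ a b).1 hab <;>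
        simp [contract, hvu.symm, Relation.ReflTransGen.refl]
  rw [reachable_iff_reflTransGen] at h ⊢
  simpa [contract, Function.onFun, hvw.symm] using
    Relation.ReflTransGen.lift' contract contract_adj v w h

theorem isAcyclic_sup_edge_sup_edge_iff (hv : H.IsIsolated v) (hvu : v ≠ u) (hvw : v ≠ w)
    (hnadj : ¬ H.Adj u w) :
    (H ⊔ edge v u ⊔ edge v w).IsAcyclic ↔ (H ⊔ edge u w).IsAcyclic := by
  have hvw_adj : (H ⊔ edge v u).Adj v w ↔ u = w := by
    simp only [sup_adj, edge_adj, hv w, false_or]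
    grind
  rw [isAcyclic_sup_fromEdgeSet_iff, isAcyclic_sup_edge_iff_of_isIsolated hv,
    isAcyclic_sup_fromEdgeSet_iff, reachable_sup_edge_iff_of_isIsolated hv hvu hvw, hvw_adj]
  simp only [hvw, hnadj, false_or, or_false]

theorem induce_sup_edge_of_mem (ha : a ∈ s) (hb : b ∈ s) :
    (G ⊔ edge a b).induce s = G.induce s ⊔ edge ⟨a, ha⟩ ⟨b, hb⟩ := by
  ext x y
  simp [edge_adj, Subtype.ext_iff]

theorem induce_sup_edge_of_left_notMem (ha : a ∉ s) :
    (G ⊔ edge a b).induce s = G.induce s := by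
  ext x y
  simp only [comap_adj, sup_adj, edge_adj, Function.Embedding.subtype_apply]
  grind

theorem induce_sup_edge_of_right_notMem (hb : b ∉ s) :
    (G ⊔ edge a b).induce s = G.induce s := by
  rw [edge_comm, induce_sup_edge_of_left_notMem hb]

theorem isAcyclic_induce_sup_edge_sup_edge_iff (hv : H.IsIsolated v) (hvu : v ≠ u) (hvw : v ≠ w)
    (hnadj : ¬ H.Adj u w) (hvs : v ∈ s) :
    ((H ⊔ edge v u ⊔ edge v w).induce s).IsAcyclic ↔ ((H ⊔ edge u w).induce s).IsAcyclic := by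
  have hv' : (H.induce s).IsIsolated ⟨v, hvs⟩ := fun x ↦ hv x
  by_cases hu : u ∈ s
  · by_cases hw : w ∈ s
    · rw [induce_sup_edge_of_mem hvs hw, induce_sup_edge_of_mem hvs hu,
        induce_sup_edge_of_mem hu hw]
      exact isAcyclic_sup_edge_sup_edge_iff hv' (Subtype.coe_ne_coe.1 hvu)
        (Subtype.coe_ne_coe.1 hvw) hnadj
    · rw [induce_sup_edge_of_right_notMem hw, induce_sup_edge_of_right_notMem hw,
        induce_sup_edge_of_mem hvs hu, isAcyclic_sup_edge_iff_of_isIsolated hv']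
  · rw [sup_right_comm, induce_sup_edge_of_right_notMem hu, induce_sup_edge_of_left_notMem hu]
    by_cases hw : w ∈ s
    · rw [induce_sup_edge_of_mem hvs hw, isAcyclic_sup_edge_iff_of_isIsolated hv']
    · rw [induce_sup_edge_of_right_notMem hw]

end Acyclic

section Suppress

variable {V : Type*} {G : SimpleGraph V} {u v w : V} {s : Set V}

/-- Suppression of the vertex `v` with neighbors `u` and `w`: the path `u - v - w` is replaced by
the edge `uw`. The vertex `v` stays in the graph, as an isolated vertex. -/
def suppress (G : SimpleGraph V) (v u w : V) : SimpleGraph V :=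
  G.deleteEdges {s(v, u), s(v, w)} ⊔ fromEdgeSet {s(u, w)}

theorem incidenceSet_eq_image_neighborSet (G : SimpleGraph V) (v : V) :
    G.incidenceSet v = (s(v, ·)) '' G.neighborSet v := by
  ext e
  induction e with | h a b =>
  simp only [mk'_mem_incidenceSet_iff, Set.mem_image, mem_neighborSet, Sym2.eq_iff]
  grind [G.adj_comm a b]

theorem deleteIncidenceSet_eq_deleteEdges (hN : G.neighborSet v = {u, w}) :
    G.deleteIncidenceSet v = G.deleteEdges {s(v, u), s(v, w)} := by
  rw [deleteIncidenceSet, incidenceSet_eq_image_neighborSet, hN, Set.image_pair]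

theorem suppress_eq_deleteIncidenceSet_sup (hN : G.neighborSet v = {u, w}) :
    suppress G v u w = G.deleteIncidenceSet v ⊔ edge u w := by
  rw [deleteIncidenceSet_eq_deleteEdges hN, suppress, edge]

theorem adj_and_adj_of_neighborSet_eq_pair (hN : G.neighborSet v = {u, w}) :
    G.Adj v u ∧ G.Adj v w := by
  have hadj : ∀ x, G.Adj v x ↔ x = u ∨ x = w := fun x ↦ Set.ext_iff.1 hN x
  exact ⟨(hadj u).2 (Or.inl rfl), (hadj w).2 (Or.inr rfl)⟩

theorem deleteIncidenceSet_sup_edge_sup_edge (hN : G.neighborSet v = {u, w}) :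
    G.deleteIncidenceSet v ⊔ edge v u ⊔ edge v w = G := by
  obtain ⟨hvu, hvw⟩ := adj_and_adj_of_neighborSet_eq_pair hN
  have hpair : edge v u ⊔ edge v w = fromEdgeSet {s(v, u), s(v, w)} :=
    (fromEdgeSet_union _ _).symm
  have hle : edge v u ⊔ edge v w ≤ G :=
    sup_le (G.edge_le_iff.2 (Or.inr hvu)) (G.edge_le_iff.2 (Or.inr hvw))
  rw [deleteIncidenceSet_eq_deleteEdges hN, sup_assoc, deleteEdges, ← hpair, sdiff_sup_cancel hle]

theorem isIsolated_deleteIncidenceSet (G : SimpleGraph V) (v : V) :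
    (G.deleteIncidenceSet v).IsIsolated v :=
  fun _ h ↦ (deleteIncidenceSet_adj.1 h).2.1 rfl

theorem isIsolated_suppress (hN : G.neighborSet v = {u, w}) : (suppress G v u w).IsIsolated v := by
  obtain ⟨hvu, hvw⟩ := adj_and_adj_of_neighborSet_eq_pair hN
  rw [suppress_eq_deleteIncidenceSet_sup hN]
  rintro x (h | h)
  · exact isIsolated_deleteIncidenceSet G v x h
  · obtain ⟨⟨rfl, -⟩ | ⟨rfl, -⟩, -⟩ := (edge_adj u w v x).1 h
    · exact hvu.ne rfl
    · exact hvw.ne rfl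

theorem deleteIncidenceSet_suppress_le : (suppress G v u w).deleteIncidenceSet u ≤ G := by
  intro a b h
  obtain ⟨h | h, hau, hbu⟩ := deleteIncidenceSet_adj.1 h
  · exact deleteEdges_le _ h
  · obtain ⟨⟨rfl, -⟩ | ⟨-, rfl⟩, -⟩ := (edge_adj u w a b).1 h
    · exact absurd rfl hau
    · exact absurd rfl hbu

theorem isAcyclic_induce_suppress_iff (hN : G.neighborSet v = {u, w}) (hnadj : ¬ G.Adj u w)
    (hvs : v ∈ s) : ((suppress G v u w).induce s).IsAcyclic ↔ (G.induce s).IsAcyclic := by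
  obtain ⟨hvu, hvw⟩ := adj_and_adj_of_neighborSet_eq_pair hN
  have h := isAcyclic_induce_sup_edge_sup_edge_iff (isIsolated_deleteIncidenceSet G v) hvu.ne
    hvw.ne (fun h ↦ hnadj (deleteIncidenceSet_le G v h)) hvs
  rw [deleteIncidenceSet_sup_edge_sup_edge hN, ← suppress_eq_deleteIncidenceSet_sup hN] at h
  exact h.symm

theorem isAcyclic_induce_of_suppress (hN : G.neighborSet v = {u, w}) (hnadj : ¬ G.Adj u w)
    (h : ((suppress G v u w).induce s).IsAcyclic) : (G.induce s).IsAcyclic := by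
  by_cases hvs : v ∈ s
  · exact (isAcyclic_induce_suppress_iff hN hnadj hvs).1 h
  · rw [suppress_eq_deleteIncidenceSet_sup hN] at h
    rw [← G.induce_deleteIncidenceSet_of_notMem hvs]
    exact h.anti (comap_monotone _ le_sup_left)

end Suppress

section SimFVS

variable {V : Type*} {α : ℕ} {G : Fin α → SimpleGraph V} {i : Fin α} {v u w : V} {S : Set V}

theorem isSimFVS_update_iff {K : SimpleGraph V} :
    IsSimFVS (Function.update G i K) S ↔
      (K.induce Sᶜ).IsAcyclic ∧ ∀ j, j ≠ i → ((G j).induce Sᶜ).IsAcyclic :=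
  Function.forall_update_iff G fun _ (H : SimpleGraph V) ↦ (H.induce Sᶜ).IsAcyclic

theorem IsSimFVS.of_update_suppress (hN : (G i).neighborSet v = {u, w})
    (hnadj : ¬ (G i).Adj u w)
    (h : IsSimFVS (Function.update G i (suppress (G i) v u w)) S) : IsSimFVS G S := by
  obtain ⟨hi, hother⟩ := isSimFVS_update_iff.1 h
  intro j
  obtain rfl | hj := eq_or_ne j i
  · exact isAcyclic_induce_of_suppress hN hnadj hi
  · exact hother j hj

theorem IsSimFVS.update_suppress_of_notMem (h : IsSimFVS G S)
    (hN : (G i).neighborSet v = {u, w}) (hnadj : ¬ (G i).Adj u w) (hvS : v ∉ S) :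
    IsSimFVS (Function.update G i (suppress (G i) v u w)) S :=
  isSimFVS_update_iff.2 ⟨(isAcyclic_induce_suppress_iff hN hnadj hvS).2 (h i), fun j _ ↦ h j⟩

theorem IsSimFVS.update_suppress_insert_sdiff (h : IsSimFVS G S)
    (hN : (G i).neighborSet v = {u, w}) (hother : ∀ j, j ≠ i → (G j).IsIsolated v) :
    IsSimFVS (Function.update G i (suppress (G i) v u w)) (insert u (S \ {v})) :=
  isSimFVS_update_iff.2
    ⟨isAcyclic_induce_insert_sdiff (isIsolated_suppress hN) deleteIncidenceSet_suppress_le (h i),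
      fun j hj ↦ isAcyclic_induce_insert_sdiff (hother j hj) (deleteIncidenceSet_le (G j) u) (h j)⟩

end SimFVS

theorem alphaSimFVS_R3_safe_general {V : Type*} {α : ℕ}
    (G : Fin α → SimpleGraph V) (i : Fin α) (v u w : V)
    (hN : (G i).neighborSet v = {u, w})
    (hother : ∀ j, j ≠ i → (G j).neighborSet v = ∅)
    (hnadj : ¬ (G i).Adj u w) (k : ℕ) :
    (∃ S : Finset V, S.card ≤ k ∧ IsSimFVS G ↑S) ↔
    (∃ S : Finset V, S.card ≤ k ∧
      IsSimFVS (Function.update G i (suppress (G i) v u w)) ↑S) := by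
  classical
  constructor
  · rintro ⟨S, hS, h⟩
    by_cases hvS : v ∈ S
    · have hcard : (insert u (S.erase v)).card ≤ S.card :=
        (Finset.card_insert_le u _).trans (Finset.card_erase_add_one hvS).le
      refine ⟨insert u (S.erase v), hcard.trans hS, ?_⟩
      rw [Finset.coe_insert, Finset.coe_erase]
      exact h.update_suppress_insert_sdiff hN fun j hj ↦
        ((G j).neighborSet_eq_empty).1 (hother j hj)
    · exact ⟨S, hS, h.update_suppress_of_notMem hN hnadj hvS⟩
  · rintro ⟨S, hS, h⟩
    exact ⟨S, hS, h.of_update_suppress hN hnadj⟩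

/-- Safeness of reduction rule α-SimFVS.R3 (simple-graph setting): if `v` has total degree 2
with both edges in the color-`i` graph, going to distinct, nonadjacent neighbors `u` and `w`,
then replacing the edges `(v,u)`, `(v,w)` of color `i` by the edge `(u,w)` of color `i`
preserves the existence of an α-simultaneous feedback vertex set of size at most `k`. -/
theorem alphaSimFVS_R3_safe {V : Type*} [Fintype V] [DecidableEq V] {α : ℕ}
    (G : Fin α → SimpleGraph V) (i : Fin α) (v u w : V) (huw : u ≠ w)
    (hN : (G i).neighborSet v = {u, w})
    (hother : ∀ j, j ≠ i → (G j).neighborSet v = ∅)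
    (hnadj : ¬ (G i).Adj u w) (k : ℕ) :
    (∃ S : Finset V, S.card ≤ k ∧ IsSimFVS G ↑S) ↔
    (∃ S : Finset V, S.card ≤ k ∧
      IsSimFVS (Function.update G i
        ((G i).deleteEdges {s(v, u), s(v, w)} ⊔ SimpleGraph.fromEdgeSet {s(u, w)})) ↑S) :=
  alphaSimFVS_R3_safe_general G i v u w hN hother hnadj k
end

section
/- Let G be a simple graph in which every vertex has degree at least 2, and let W ⊆ V(G) be a set of vertices such that the graph F = G − W is a forest; root each tree of F at an arbitrary vertex. Let v_c be a cordate vertex of F such that no cordate vertex in the same tree of F has strictly larger index, and let u_c be a vertex of the subtree T_{v_c} having a neighbor in W. Then on the unique path u_c, x_1, …, x_t, v_c in F from u_c to v_c, every internal vertex x_1, …, x_t has degree exactly 2 in G. -/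
/-!
Let `x` be an internal vertex of the path. It lies strictly below `v_c`, so it is not cordate, and
hence `u_c` is the only vertex of `T_x` with a neighbor in `W`. The deepest vertex of any subtree
has at most one neighbor in `F`, so having degree at least 2 it has a neighbor in `W`. Therefore the
subtree of every child of `x` contains `u_c`, which leaves room for only one child. As `x ≠ u_c` has
no neighbor in `W`, its only other possible neighbor is its parent.
-/

open SimpleGraph

/-- `x` lies in the subtree rooted at `v` (with respect to the rooting `root` of the forest
`F`): the vertex `v` lies on every path (hence on the unique path) in `F` from `x` to the
root of the tree containing `x`. -/
def Subtree {β : Type*} (F : SimpleGraph β) (root : β → β) (v : β) : Set β :=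
  {x | ∀ p : F.Walk x (root x), p.IsPath → v ∈ p.support}

/-- `x` has a neighbor in `W` (in the graph `G`). -/
def NbrInW {V : Type*} (G : SimpleGraph V) (W : Set V) (x : V) : Prop :=
  ∃ w ∈ W, G.Adj x w

/-- A vertex `v` of the forest `F = G − W` is cordate if either it is a leaf or isolated
vertex of `F` with at least two neighbors in `W`, or its subtree contains two distinct
vertices each having at least one neighbor in `W`. -/
def Cordate {V : Type*} (G : SimpleGraph V) (W : Set V)
    (F : SimpleGraph ↥Wᶜ) (root : ↥Wᶜ → ↥Wᶜ) (v : ↥Wᶜ) : Prop :=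
  ((F.neighborSet v).ncard ≤ 1 ∧ 2 ≤ {w | w ∈ W ∧ G.Adj ↑v w}.ncard) ∨
  (∃ a ∈ Subtree F root v, ∃ b ∈ Subtree F root v,
    a ≠ b ∧ NbrInW G W ↑a ∧ NbrInW G W ↑b)

/-- `root` is a rooting of `F`: it sends each vertex to the root of its connected component, one
vertex of that component. For acyclic `F` this is the rooting of a forest tree by tree. -/
structure IsRooting {β : Type*} (F : SimpleGraph β) (root : β → β) : Prop where
  reachable_root (x : β) : F.Reachable x (root x)
  root_eq {x y : β} : F.Reachable x y → root x = root y

section RootedForest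

variable {β : Type*} {F : SimpleGraph β} {root : β → β} {a b r u v w x : β}

theorem mem_support_of_mem_subtree (hu : u ∈ Subtree F root v) (hr : root u = r)
    {q : F.Walk u r} (hq : q.IsPath) : v ∈ q.support := by
  subst hr
  exact hu q hq

theorem mem_subtree_of_mem_support (hF : F.IsAcyclic) (hr : root u = r)
    {q : F.Walk u r} (hq : q.IsPath) (hv : v ∈ q.support) : u ∈ Subtree F root v := by
  subst hr
  intro p hp
  have hpq : p = q :=
    congrArg Subtype.val ((hF.subsingleton_path u (root u)).elim ⟨p, hp⟩ ⟨q, hq⟩)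
  rwa [hpq]

theorem mem_subtree_self (F : SimpleGraph β) (root : β → β) (v : β) : v ∈ Subtree F root v :=
  fun p _ ↦ p.start_mem_support

namespace IsRooting

theorem reachable_of_mem_subtree (h : IsRooting F root) (hu : u ∈ Subtree F root v) :
    F.Reachable u v := by
  classical
  obtain ⟨q, hq⟩ := (h.reachable_root u).exists_isPath
  exact (q.takeUntil v (hu q hq)).reachable

theorem mem_subtree_trans (h : IsRooting F root) (hu : u ∈ Subtree F root v)
    (hv : v ∈ Subtree F root w) : u ∈ Subtree F root w := by
  classical
  intro q hq
  have hvq : v ∈ q.support := hu q hq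
  have hroot : root v = root u := (h.root_eq (h.reachable_of_mem_subtree hu)).symm
  exact q.support_dropUntil_subset_support hvq
    (mem_support_of_mem_subtree hv hroot (hq.dropUntil hvq))

theorem dist_root_eq_add (h : IsRooting F root) (hu : u ∈ Subtree F root v) :
    F.dist u (root u) = F.dist u v + F.dist v (root v) := by
  classical
  have huv := h.reachable_of_mem_subtree hu
  rw [← h.root_eq huv]
  obtain ⟨q, hq, hlen⟩ := (h.reachable_root u).exists_path_of_dist
  have hv : v ∈ q.support := hu q hq
  refine (huv.dist_triangle_left _).antisymm ?_
  calc F.dist u v + F.dist v (root u)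
      ≤ (q.takeUntil v hv).length + (q.dropUntil v hv).length :=
        add_le_add (dist_le _) (dist_le _)
    _ = F.dist u (root u) := by rw [← Walk.length_append, q.take_spec hv, hlen]

theorem dist_root_lt (h : IsRooting F root) (hu : u ∈ Subtree F root v) (hne : u ≠ v) :
    F.dist v (root v) < F.dist u (root u) := by
  have hpos := (h.reachable_of_mem_subtree hu).pos_dist_of_ne hne
  have hadd := h.dist_root_eq_add hu
  lia

theorem dist_root_eq_add_one_of_adj (h : IsRooting F root) (hu : u ∈ Subtree F root v)
    (hadj : F.Adj u v) : F.dist u (root u) = F.dist v (root v) + 1 := by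
  rw [h.dist_root_eq_add hu, dist_eq_one_iff_adj.mpr hadj, add_comm]

theorem exists_isPath_append (h : IsRooting F root) (hF : F.IsAcyclic)
    (hu : u ∈ Subtree F root v) {p : F.Walk u v} (hp : p.IsPath) :
    ∃ q : F.Walk v (root u), (p.append q).IsPath := by
  classical
  obtain ⟨q, hq⟩ := (h.reachable_root u).exists_isPath
  have hv : v ∈ q.support := hu q hq
  have hpq : q.takeUntil v hv = p :=
    congrArg Subtype.val ((hF.subsingleton_path u v).elim ⟨_, hq.takeUntil hv⟩ ⟨p, hp⟩)
  refine ⟨q.dropUntil v hv, ?_⟩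
  rwa [← hpq, q.take_spec hv]

theorem start_mem_subtree_of_mem_path (h : IsRooting F root) (hF : F.IsAcyclic)
    (hu : u ∈ Subtree F root v) {p : F.Walk u v} (hp : p.IsPath) (hx : x ∈ p.support) :
    u ∈ Subtree F root x := by
  obtain ⟨q, hpq⟩ := h.exists_isPath_append hF hu hp
  exact mem_subtree_of_mem_support hF rfl hpq (p.support_subset_support_append_left q hx)

theorem mem_subtree_end_of_mem_path (h : IsRooting F root) (hF : F.IsAcyclic)
    (hu : u ∈ Subtree F root v) {p : F.Walk u v} (hp : p.IsPath) (hx : x ∈ p.support) :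
    x ∈ Subtree F root v := by
  classical
  obtain ⟨q, hpq⟩ := h.exists_isPath_append hF hu hp
  rw [← p.take_spec hx, ← Walk.append_assoc] at hpq
  have hroot : root x = root u := (h.root_eq (p.takeUntil x hx).reachable).symm
  exact mem_subtree_of_mem_support hF hroot hpq.of_append_right (by simp)

theorem mem_subtree_or_mem_subtree (h : IsRooting F root) (hF : F.IsAcyclic)
    (ha : u ∈ Subtree F root a) (hb : u ∈ Subtree F root b) :
    a ∈ Subtree F root b ∨ b ∈ Subtree F root a := by
  classical
  obtain ⟨q, hq⟩ := (h.reachable_root u).exists_isPath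
  have haq : a ∈ q.support := ha q hq
  have hbq : b ∈ q.support := hb q hq
  rw [← q.take_spec haq, Walk.mem_support_append_iff] at hbq
  rcases hbq with hbefore | hafter
  · exact .inr (h.mem_subtree_end_of_mem_path hF ha (hq.takeUntil haq) hbefore)
  · have hroot : root a = root u := (h.root_eq (h.reachable_of_mem_subtree ha)).symm
    exact .inl (mem_subtree_of_mem_support hF hroot (hq.dropUntil haq) hafter)

theorem eq_of_mem_subtree_of_dist_root_eq (h : IsRooting F root) (hF : F.IsAcyclic)
    (ha : u ∈ Subtree F root a) (hb : u ∈ Subtree F root b)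
    (hdist : F.dist a (root a) = F.dist b (root b)) : a = b := by
  by_contra hne
  rcases h.mem_subtree_or_mem_subtree hF ha hb with hab | hba
  · exact (h.dist_root_lt hab hne).ne' hdist
  · exact (h.dist_root_lt hba (Ne.symm hne)).ne hdist

theorem mem_subtree_or_mem_subtree_of_adj (h : IsRooting F root) (hF : F.IsAcyclic)
    (hadj : F.Adj a b) : a ∈ Subtree F root b ∨ b ∈ Subtree F root a := by
  obtain ⟨q, hq⟩ := (h.reachable_root a).exists_isPath
  by_cases hb : b ∈ q.support
  · exact .inl (mem_subtree_of_mem_support hF rfl hq hb)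
  · have hroot : root b = root a := (h.root_eq hadj.reachable).symm
    exact .inr (mem_subtree_of_mem_support hF hroot (hq.cons (h := hadj.symm) hb) (by simp))

theorem subsingleton_parents (h : IsRooting F root) (hF : F.IsAcyclic) (x : β) :
    {y | F.Adj x y ∧ x ∈ Subtree F root y}.Subsingleton := by
  rintro a ⟨hxa, ha⟩ b ⟨hxb, hb⟩
  refine h.eq_of_mem_subtree_of_dist_root_eq hF ha hb ?_
  have hdist_a := h.dist_root_eq_add_one_of_adj ha hxa
  have hdist_b := h.dist_root_eq_add_one_of_adj hb hxb
  lia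

theorem subsingleton_children_toward (h : IsRooting F root) (hF : F.IsAcyclic) (x u : β) :
    {y | F.Adj x y ∧ y ∈ Subtree F root x ∧ u ∈ Subtree F root y}.Subsingleton := by
  rintro a ⟨hxa, hax, ha⟩ b ⟨hxb, hbx, hb⟩
  refine h.eq_of_mem_subtree_of_dist_root_eq hF ha hb ?_
  rw [h.dist_root_eq_add_one_of_adj hax hxa.symm, h.dist_root_eq_add_one_of_adj hbx hxb.symm]

theorem exists_mem_subtree_subsingleton_neighborSet (h : IsRooting F root) (hF : F.IsAcyclic)
    (hfin : (Subtree F root v).Finite) :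
    ∃ z ∈ Subtree F root v, (F.neighborSet z).Subsingleton := by
  obtain ⟨z, hz, hmax⟩ := Set.exists_max_image _ (fun z ↦ F.dist z (root z)) hfin
    ⟨v, mem_subtree_self F root v⟩
  refine ⟨z, hz, (h.subsingleton_parents hF z).anti fun y hzy ↦ ⟨hzy, ?_⟩⟩
  refine (h.mem_subtree_or_mem_subtree_of_adj hF hzy).resolve_right fun hyz ↦ ?_
  exact (hmax y (h.mem_subtree_trans hyz hz)).not_gt (h.dist_root_lt hyz hzy.ne')

theorem ncard_neighborSet_le_two (h : IsRooting F root) (hF : F.IsAcyclic)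
    (hchild : ∀ y, F.Adj x y → y ∈ Subtree F root x → u ∈ Subtree F root y) :
    (F.neighborSet x).ncard ≤ 2 := by
  have hparents := h.subsingleton_parents hF x
  have hchildren := h.subsingleton_children_toward hF x u
  have := hparents.finite.to_subtype
  have := hchildren.finite.to_subtype
  have hcover : F.neighborSet x ⊆ {y | F.Adj x y ∧ x ∈ Subtree F root y} ∪
      {y | F.Adj x y ∧ y ∈ Subtree F root x ∧ u ∈ Subtree F root y} := fun y hxy ↦
    (h.mem_subtree_or_mem_subtree_of_adj hF hxy).imp
      (fun hx ↦ ⟨hxy, hx⟩) (fun hy ↦ ⟨hxy, hy, hchild y hxy hy⟩)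
  calc (F.neighborSet x).ncard
      ≤ _ := Set.ncard_le_ncard hcover (hparents.finite.union hchildren.finite)
    _ ≤ _ := Set.ncard_union_le _ _
    _ ≤ 1 + 1 := add_le_add (Set.ncard_le_one_iff_subsingleton.mpr hparents)
        (Set.ncard_le_one_iff_subsingleton.mpr hchildren)

end IsRooting

end RootedForest

section Cordate

variable {V : Type*} {G : SimpleGraph V} {W : Set V} {root : ↥Wᶜ → ↥Wᶜ} {u v x : ↥Wᶜ}

theorem ncard_neighborSet_induce_compl (hx : ¬ NbrInW G W ↑x) :
    ((G.induce Wᶜ).neighborSet x).ncard = (G.neighborSet ↑x).ncard := by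
  rw [← Set.ncard_image_of_injective _ Subtype.val_injective]
  congr 1
  ext y
  refine ⟨?_, fun hxy ↦ ⟨⟨y, fun hy ↦ hx ⟨y, hy, hxy⟩⟩, hxy, rfl⟩⟩
  rintro ⟨z, hxz, rfl⟩
  exact hxz

theorem exists_nbrInW_mem_subtree (hdeg : ∀ x : ↥Wᶜ, 2 ≤ (G.neighborSet ↑x).ncard)
    (hF : (G.induce Wᶜ).IsAcyclic) (h : IsRooting (G.induce Wᶜ) root)
    (hfin : (Subtree (G.induce Wᶜ) root v).Finite) :
    ∃ z ∈ Subtree (G.induce Wᶜ) root v, NbrInW G W ↑z := by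
  obtain ⟨z, hz, hsub⟩ := h.exists_mem_subtree_subsingleton_neighborSet hF hfin
  refine ⟨z, hz, by_contra fun hzW ↦ ?_⟩
  have := hsub.finite.to_subtype
  have hle : (G.neighborSet ↑z).ncard ≤ 1 :=
    ncard_neighborSet_induce_compl hzW ▸ Set.ncard_le_one_iff_subsingleton.mpr hsub
  exact absurd (hdeg z) (by lia)

theorem eq_of_not_cordate {F : SimpleGraph ↥Wᶜ} (hv : ¬ Cordate G W F root v) {a b : ↥Wᶜ}
    (ha : a ∈ Subtree F root v) (haW : NbrInW G W ↑a)
    (hb : b ∈ Subtree F root v) (hbW : NbrInW G W ↑b) : a = b :=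
  by_contra fun hne ↦ hv (.inr ⟨a, ha, b, hb, hne, haW, hbW⟩)

theorem ncard_neighborSet_eq_two_of_not_cordate
    (hdeg : ∀ x : ↥Wᶜ, 2 ≤ (G.neighborSet ↑x).ncard)
    (hF : (G.induce Wᶜ).IsAcyclic) (h : IsRooting (G.induce Wᶜ) root)
    (hfin : (Subtree (G.induce Wᶜ) root x).Finite) (hx : ¬ Cordate G W (G.induce Wᶜ) root x)
    (hu : u ∈ Subtree (G.induce Wᶜ) root x) (huW : NbrInW G W ↑u) (hxu : x ≠ u) :
    (G.neighborSet ↑x).ncard = 2 := by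
  have hxW : ¬ NbrInW G W ↑x := fun hxW ↦
    hxu (eq_of_not_cordate hx (mem_subtree_self _ root x) hxW hu huW)
  have hchild : ∀ y, (G.induce Wᶜ).Adj x y → y ∈ Subtree (G.induce Wᶜ) root x →
      u ∈ Subtree (G.induce Wᶜ) root y := by
    intro y _ hy
    obtain ⟨z, hz, hzW⟩ := exists_nbrInW_mem_subtree hdeg hF h
      (hfin.subset fun _ ht ↦ h.mem_subtree_trans ht hy)
    rwa [eq_of_not_cordate hx hu huW (h.mem_subtree_trans hz hy) hzW]
  refine le_antisymm ?_ (hdeg x)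
  rw [← ncard_neighborSet_induce_compl hxW]
  exact h.ncard_neighborSet_le_two hF hchild

end Cordate

theorem cordate_path_internal_degree_two_general {V : Type*} {G : SimpleGraph V} {W : Set V}
    (hdeg : ∀ x : ↥Wᶜ, 2 ≤ (G.neighborSet ↑x).ncard) (hF : (G.induce Wᶜ).IsAcyclic)
    {root : ↥Wᶜ → ↥Wᶜ} (h : IsRooting (G.induce Wᶜ) root) {v : ↥Wᶜ}
    (hfin : (Subtree (G.induce Wᶜ) root v).Finite)
    (hv : ∀ x ∈ Subtree (G.induce Wᶜ) root v, x ≠ v → ¬ Cordate G W (G.induce Wᶜ) root x)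
    {u : ↥Wᶜ} (hu : u ∈ Subtree (G.induce Wᶜ) root v) (huW : NbrInW G W ↑u)
    {p : (G.induce Wᶜ).Walk u v} (hp : p.IsPath) :
    ∀ x ∈ p.support, x ≠ u → x ≠ v → (G.neighborSet ↑x).ncard = 2 := by
  intro x hxp hxu hxv
  have hx : x ∈ Subtree (G.induce Wᶜ) root v := h.mem_subtree_end_of_mem_path hF hu hp hxp
  have hfin_x : (Subtree (G.induce Wᶜ) root x).Finite :=
    hfin.subset fun _ ht ↦ h.mem_subtree_trans ht hx
  exact ncard_neighborSet_eq_two_of_not_cordate hdeg hF h hfin_x (hv x hx hxv)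
    (h.start_mem_subtree_of_mem_path hF hu hp hxp) huW hxu

/-- Let `G` be a simple graph with all degrees at least 2 and let `W` be a vertex set such
that `F = G − W` is a forest, rooted via `root` (every vertex reaches its root, and the
root is constant on components).  If `v_c` is a cordate vertex whose index (distance to its
root) is maximum among cordate vertices of its tree, and `u_c` is a vertex of the subtree of
`v_c` with a neighbor in `W`, then every internal vertex of the unique path in `F` from
`u_c` to `v_c` has degree exactly 2 in `G`. -/
theorem cordate_path_internal_degree_two {V : Type*} [Fintype V]
    (G : SimpleGraph V) (W : Set V)
    (hdeg : ∀ x : V, 2 ≤ (G.neighborSet x).ncard)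
    (hforest : (G.induce Wᶜ).IsAcyclic)
    (root : ↥Wᶜ → ↥Wᶜ)
    (hreach : ∀ x, (G.induce Wᶜ).Reachable x (root x))
    (hconst : ∀ x y, (G.induce Wᶜ).Reachable x y → root x = root y)
    (vc : ↥Wᶜ)
    (hvc : Cordate G W (G.induce Wᶜ) root vc)
    (hmax : ∀ x, Cordate G W (G.induce Wᶜ) root x → (G.induce Wᶜ).Reachable x vc →
      (G.induce Wᶜ).dist x (root x) ≤ (G.induce Wᶜ).dist vc (root vc))
    (uc : ↥Wᶜ) (huc : uc ∈ Subtree (G.induce Wᶜ) root vc) (hucW : NbrInW G W ↑uc)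
    (p : (G.induce Wᶜ).Walk uc vc) (hp : p.IsPath) :
    ∀ x ∈ p.support, x ≠ uc → x ≠ vc → (G.neighborSet ↑x).ncard = 2 :=
  have h : IsRooting (G.induce Wᶜ) root := ⟨hreach, hconst _ _⟩
  cordate_path_internal_degree_two_general (fun x ↦ hdeg x) hforest h (Set.toFinite _)
    (fun x hx hne hcord ↦ (hmax x hcord (h.reachable_of_mem_subtree hx)).not_gt
      (h.dist_root_lt hx hne)) huc hucW hp
end

section
/- Let G = (V, E_1, …, E_α) be an α-edge-colored graph, let i ∈ {1, …, α}, and suppose the color-i graph G_i contains a v-flower of order k+1 for some vertex v, i.e., k+1 cycles of G_i whose pairwise intersection of vertex sets is exactly {v}. Then every α-simultaneous feedback vertex set of G of size at most k contains v; consequently, G has an α-simultaneous feedback vertex set of size at most k if and only if G − v has an α-simultaneous feedback vertex set of size at most k − 1. (Safeness of reduction rule α-SimFVS.R6.) -/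
open SimpleGraph

/-!
A simultaneous feedback vertex set avoiding `v` must hit every petal of a `v`-flower at a vertex
other than `v`, and these vertices are distinct because the petals meet only in `v`. Hence a
simultaneous feedback vertex set smaller than the order of the flower contains `v`, and
`S ↦ S \ {v}` matches the sets containing `v` with those of `G - v`.
-/

section Acyclic

variable {V : Type*} {H : SimpleGraph V}

theorem exists_mem_support_of_isAcyclic_induce_compl {S : Set V}
    (hS : (H.induce Sᶜ).IsAcyclic) {v : V} {c : H.Walk v v} (hc : c.IsCycle) :
    ∃ x ∈ S, x ∈ c.support := by
  by_contra! hdisj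
  have hsupp : ∀ x ∈ c.support, x ∈ Sᶜ := fun x hx hxS => hdisj x hxS hx
  refine hS (c.induce Sᶜ hsupp) (.of_map (f := (Embedding.induce Sᶜ).toHom) ?_)
  rwa [Walk.map_induce]

theorem isAcyclic_induce_induce_iff {s : Set V} {t : Set s} :
    ((H.induce s).induce t).IsAcyclic ↔ (H.induce (Subtype.val '' t)).IsAcyclic :=
  Iso.isAcyclic_iff ⟨Equiv.Set.image _ t Subtype.val_injective, Iff.rfl⟩

end Acyclic

section Flower

variable {V ι : Type*} {H : SimpleGraph V} {v : V} {C : ι → H.Walk v v}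

/-- The walks `C j` form a `v`-flower of `H`: they are cycles, and any two of them share exactly
the vertex `v`. The order of the flower is the cardinality of `ι`; each cycle is encoded as a
closed walk based at `v`. -/
structure IsFlower (C : ι → H.Walk v v) : Prop where
  isCycle : ∀ j, (C j).IsCycle
  support_inter_support :
    Pairwise fun j j' => {x | x ∈ (C j).support} ∩ {x | x ∈ (C j').support} = {v}

theorem IsFlower.card_le_of_hitting [Fintype ι] (hC : IsFlower C) {S : Finset V} (hv : v ∉ S)
    (hS : ∀ j, ∃ x ∈ S, x ∈ (C j).support) : Fintype.card ι ≤ S.card := by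
  choose f hfS hfC using hS
  have f_injective : Function.Injective f := by
    intro j j' hjj'
    by_contra hne
    have hfv : f j = v := (hC.support_inter_support hne).subset ⟨hfC j, hjj' ▸ hfC j'⟩
    exact hv (hfv ▸ hfS j)
  exact Finset.card_le_card_of_injOn f (fun j _ => hfS j) f_injective.injOn

theorem IsFlower.mem_of_isAcyclic_induce_compl [Fintype ι] (hC : IsFlower C) {S : Finset V}
    (hcard : S.card < Fintype.card ι) (hS : (H.induce (S : Set V)ᶜ).IsAcyclic) : v ∈ S := by
  by_contra hv
  exact hcard.not_ge <| hC.card_le_of_hitting hv fun j =>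
    exists_mem_support_of_isAcyclic_induce_compl hS (hC.isCycle j)

end Flower

section Deletion

variable {V : Type*} {α : ℕ} {G : Fin α → SimpleGraph V}

theorem isSimFVS_induce_iff {s : Set V} {S' : Set s} :
    IsSimFVS (fun j => (G j).induce s) S' ↔ IsSimFVS G (sᶜ ∪ Subtype.val '' S') := by
  have image_compl : Subtype.val '' S'ᶜ = (sᶜ ∪ Subtype.val '' S')ᶜ := by
    ext x
    by_cases hx : x ∈ s <;> simp [hx]
  exact forall_congr' fun j => isAcyclic_induce_induce_iff.trans (by rw [image_compl])

theorem isSimFVS_induce_ne_iff {v : V} {S' : Set {x : V | x ≠ v}} :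
    IsSimFVS (fun j => (G j).induce {x : V | x ≠ v}) S' ↔
      IsSimFVS G (insert v (Subtype.val '' S')) := by
  have compl_ne : {x : V | x ≠ v}ᶜ = {v} := compl_compl {v}
  rw [isSimFVS_induce_iff, compl_ne, Set.singleton_union]

theorem exists_isSimFVS_mem_card_le_iff {v : V} {k : ℕ} :
    (∃ S : Finset V, S.card ≤ k ∧ v ∈ S ∧ IsSimFVS G ↑S) ↔
      ∃ S' : Finset ↥{x : V | x ≠ v}, S'.card < k ∧
        IsSimFVS (fun j => (G j).induce {x : V | x ≠ v}) ↑S' := by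
  classical
  simp only [isSimFVS_induce_ne_iff]
  constructor
  · rintro ⟨S, hcard, hv, hS⟩
    refine ⟨S.subtype (· ≠ v), ?_, ?_⟩
    · rw [Finset.card_subtype, Finset.filter_ne']
      exact (Finset.card_erase_lt_of_mem hv).trans_le hcard
    · convert hS
      ext x
      by_cases hx : x = v <;> simp [hx, hv]
  · rintro ⟨S', hcard, hS'⟩
    refine ⟨insert v (S'.map (Function.Embedding.subtype _)), ?_, Finset.mem_insert_self _ _, ?_⟩
    · calc (insert v (S'.map (Function.Embedding.subtype _))).card
          ≤ (S'.map (Function.Embedding.subtype _)).card + 1 := Finset.card_insert_le _ _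
        _ = S'.card + 1 := by rw [Finset.card_map]
        _ ≤ k := hcard
    · simpa only [Finset.coe_insert, Finset.coe_map, Function.Embedding.coe_subtype] using hS'

end Deletion

theorem alphaSimFVS_R6_safe_general {V : Type*} {α : ℕ} (G : Fin α → SimpleGraph V)
    (i : Fin α) (v : V) (k : ℕ) (C : Fin (k + 1) → (G i).Walk v v) (hC : IsFlower C) :
    (∀ S : Finset V, S.card ≤ k → IsSimFVS G ↑S → v ∈ S) ∧
    ((∃ S : Finset V, S.card ≤ k ∧ IsSimFVS G ↑S) ↔
      (∃ S' : Finset ↥{x : V | x ≠ v}, (S'.card : ℤ) ≤ (k : ℤ) - 1 ∧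
        IsSimFVS (fun j => (G j).induce {x : V | x ≠ v}) ↑S')) := by
  have mem_of_isSimFVS (S : Finset V) (hcard : S.card ≤ k) (hS : IsSimFVS G ↑S) : v ∈ S :=
    hC.mem_of_isAcyclic_induce_compl (by simpa using Nat.lt_succ_of_le hcard) (hS i)
  refine ⟨mem_of_isSimFVS, ?_⟩
  simp only [Int.le_sub_one_iff, Nat.cast_lt, ← exists_isSimFVS_mem_card_le_iff]
  exact exists_congr fun S => and_congr_right fun hcard =>
    (and_iff_right_of_imp (mem_of_isSimFVS S hcard)).symm

/-- Safeness of reduction rule α-SimFVS.R6: if the color-`i` graph contains a `v`-flower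
of order `k+1` (that is, `k+1` cycles whose pairwise intersection of vertex sets is exactly
`{v}`), then every α-simultaneous feedback vertex set of size at most `k` contains `v`;
consequently, `G` has an α-simfvs of size at most `k` iff `G − v` has an α-simfvs of
size at most `k − 1`. -/
theorem alphaSimFVS_R6_safe {V : Type*} [Fintype V] [DecidableEq V] {α : ℕ}
    (G : Fin α → SimpleGraph V) (i : Fin α) (v : V) (k : ℕ)
    (C : Fin (k + 1) → (G i).Walk v v)
    (hcyc : ∀ j, (C j).IsCycle)
    (hflower : ∀ j j', j ≠ j' →
      {x | x ∈ (C j).support} ∩ {x | x ∈ (C j').support} = {v}) :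
    (∀ S : Finset V, S.card ≤ k → IsSimFVS G ↑S → v ∈ S) ∧
    ((∃ S : Finset V, S.card ≤ k ∧ IsSimFVS G ↑S) ↔
      (∃ S' : Finset ↥{x : V | x ≠ v}, (S'.card : ℤ) ≤ (k : ℤ) - 1 ∧
        IsSimFVS (fun j => (G j).induce {x : V | x ≠ v}) ↑S')) :=
  alphaSimFVS_R6_safe_general G i v k C ⟨hcyc, hflower⟩
end

section
/- For i ∈ {1,2}, let C_i be a finite family of nonempty finite sets that are pairwise disjoint within C_i (i.e., any two distinct members of C_i are disjoint). Let G_M be the bipartite graph whose vertex set is the disjoint union of C_1 and C_2, with an edge between A ∈ C_1 and B ∈ C_2 if and only if A ∩ B ≠ ∅. Then for every nonnegative integer k, there exists a set H ⊆ ⋃(C_1 ∪ C_2) with |H| ≤ k such that H ∩ A ≠ ∅ for every A ∈ C_1 ∪ C_2, if and only if G_M has a matching M such that |M| + |V(G_M) ∖ V(M)| ≤ k, where V(M) denotes the set of vertices covered by the matching M. -/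
open SimpleGraph

/-- The bipartite graph `G_M` whose vertex set is the disjoint union of the families
`C₁` and `C₂`, with an edge between `A ∈ C₁` and `B ∈ C₂` iff `A ∩ B ≠ ∅`. -/
def GM {U : Type*} [DecidableEq U] (C₁ C₂ : Finset (Finset U)) :
    SimpleGraph ({A // A ∈ C₁} ⊕ {B // B ∈ C₂}) :=
  SimpleGraph.fromRel (fun x y =>
    ∃ (a : {A // A ∈ C₁}) (b : {B // B ∈ C₂}),
      x = Sum.inl a ∧ y = Sum.inr b ∧ (a.1 ∩ b.1).Nonempty)

/-!
A matching `M` partitions the vertices into blocks: its edges, and the singletons of the vertices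
it leaves uncovered, so `|M| + |V ∖ V(M)|` counts blocks. Choosing from each block a point common
to its members gives a hitting set. Conversely, a hitting set lets every vertex choose a point of
`H` inside its set; as no point lies in more than two members, at most two vertices make the same
choice, and joining those that do gives a matching with at most one block per point of `H`.
-/

section Blocks

variable {V α : Type*} {G : SimpleGraph V} {M : G.Subgraph}

/-- The partition of the vertices induced by a matching `M`: the edges of `M` and the singletons of
the vertices not covered by `M`, a singleton `{v}` being encoded as the diagonal pair `s(v, v)`. -/
def matchingBlocks (M : G.Subgraph) : Set (Sym2 V) :=
  M.edgeSet ∪ Sym2.diag '' M.vertsᶜ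

theorem encard_matchingBlocks (M : G.Subgraph) :
    (matchingBlocks M).encard = M.edgeSet.encard + M.vertsᶜ.encard := by
  have edges_disjoint_diag : Disjoint M.edgeSet (Sym2.diag '' M.vertsᶜ) := by
    rw [Set.disjoint_right]
    rintro _ ⟨v, -, rfl⟩ he
    exact G.not_isDiag_of_mem_edgeSet (M.edgeSet_subset he) (Sym2.diag_isDiag v)
  rw [matchingBlocks, Set.encard_union_eq edges_disjoint_diag, Sym2.diag_injective.encard_image]

theorem exists_mem_matchingBlocks (hM : M.verts ⊆ M.support) (v : V) :
    ∃ b ∈ matchingBlocks M, v ∈ b := by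
  by_cases hv : v ∈ M.verts
  · obtain ⟨w, hvw⟩ := hM hv
    exact ⟨s(v, w), .inl hvw, Sym2.mem_mk_left v w⟩
  · exact ⟨Sym2.diag v, .inr ⟨v, hv, rfl⟩, Sym2.mem_mk_left v v⟩

theorem eq_mk_of_mem_matchingBlocks_of_adj (hM : M.IsMatching) {b : Sym2 V}
    (hb : b ∈ matchingBlocks M) {v w : V} (hv : v ∈ b) (hvw : M.Adj v w) : b = s(v, w) := by
  rcases hb with he | ⟨u, hu, rfl⟩
  · obtain ⟨x, rfl⟩ := hv
    rw [hM.eq_of_adj_left (Subgraph.mem_edgeSet.1 he) hvw]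
  · obtain rfl : v = u := by simpa [Sym2.diag] using hv
    exact absurd (M.edge_vert hvw) hu

theorem eq_of_mem_matchingBlocks (hM : M.IsMatching) {b c : Sym2 V} (hb : b ∈ matchingBlocks M)
    (hc : c ∈ matchingBlocks M) {v : V} (hvb : v ∈ b) (hvc : v ∈ c) : b = c := by
  rcases hb with he | ⟨u, hu, rfl⟩
  · obtain ⟨w, rfl⟩ := hvb
    exact (eq_mk_of_mem_matchingBlocks_of_adj hM hc hvc he).symm
  · obtain rfl : v = u := by simpa [Sym2.diag] using hvb
    rcases hc with he | ⟨w, -, rfl⟩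
    · exact absurd (M.mem_verts_of_mem_edge he hvc) hu
    · obtain rfl : v = w := by simpa [Sym2.diag] using hvc
      rfl

theorem encard_matchingBlocks_le_encard_range (hM : M.IsMatching) {f : V → α}
    (hf : ∀ v w, v ≠ w → f v = f w → M.Adj v w) :
    (matchingBlocks M).encard ≤ (Set.range f).encard := by
  refine Set.encard_le_encard_of_injOn (f := fun b => f b.out.1) (fun b _ => ⟨_, rfl⟩) ?_
  intro b hb c hc hbc
  have hvb := Sym2.out_fst_mem b
  have hwc := Sym2.out_fst_mem c
  by_cases hvw : b.out.1 = c.out.1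
  · exact eq_of_mem_matchingBlocks hM hb hc hvb (hvw ▸ hwc)
  · have adj := hf _ _ hvw hbc
    calc
      b = s(b.out.1, c.out.1) := eq_mk_of_mem_matchingBlocks_of_adj hM hb hvb adj
      _ = s(c.out.1, b.out.1) := Sym2.eq_swap
      _ = c := (eq_mk_of_mem_matchingBlocks_of_adj hM hc hwc adj.symm).symm

end Blocks

section FiberSubgraph

variable {V α : Type*} {G : SimpleGraph V}

/-- The subgraph of `G` joining distinct vertices with the same value under `f`; it is the matching
obtained from a choice `f` of a point of a hitting set in each member of the family. Vertices alone
in their fiber are left out of the subgraph. -/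
def fiberSubgraph (f : V → α) (hf : ∀ v w, v ≠ w → f v = f w → G.Adj v w) : G.Subgraph where
  verts := {v | ∃ w, v ≠ w ∧ f v = f w}
  Adj v w := v ≠ w ∧ f v = f w
  adj_sub h := hf _ _ h.1 h.2
  edge_vert h := ⟨_, h⟩
  symm := ⟨fun _ _ h => ⟨h.1.symm, h.2.symm⟩⟩

theorem subsingleton_sdiff_singleton_of_encard_le_two {s : Set α} (hs : s.encard ≤ 2) {a : α}
    (ha : a ∈ s) : (s \ {a}).Subsingleton := by
  rw [← Set.encard_le_one_iff_subsingleton, ← ENat.add_le_add_iff_right ENat.one_ne_top,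
    Set.encard_sdiff_singleton_add_one ha]
  exact hs.trans_eq one_add_one_eq_two.symm

theorem isMatching_fiberSubgraph {f : V → α} (hf : ∀ v w, v ≠ w → f v = f w → G.Adj v w)
    (hfib : ∀ x, {v | f v = x}.encard ≤ 2) : (fiberSubgraph f hf).IsMatching := by
  rintro v ⟨w, hvw, hfvw⟩
  refine ⟨w, ⟨hvw, hfvw⟩, fun u ⟨hvu, hfvu⟩ => ?_⟩
  exact subsingleton_sdiff_singleton_of_encard_le_two (hfib (f v)) (a := v) rfl
    ⟨hfvu.symm, hvu.symm⟩ ⟨hfvw.symm, hvw.symm⟩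

end FiberSubgraph

section IntersectionGraph

variable {V α : Type*} {S : V → Set α}

/-- The intersection graph of an indexed family of sets: distinct indices are adjacent when their
sets meet. The vertices are indices, so repeated members of the family are distinct vertices. -/
def intersectionGraph (S : V → Set α) : SimpleGraph V where
  Adj v w := v ≠ w ∧ (S v ∩ S w).Nonempty
  symm := ⟨fun v w h => ⟨h.1.symm, Set.inter_comm (S v) (S w) ▸ h.2⟩⟩
  loopless := ⟨fun _ h => h.1 rfl⟩

theorem exists_forall_mem_of_mem_matchingBlocks (hS : ∀ v, (S v).Nonempty)
    {M : (intersectionGraph S).Subgraph} {b : Sym2 V} (hb : b ∈ matchingBlocks M) :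
    ∃ x, ∀ v ∈ b, x ∈ S v := by
  rcases hb with he | ⟨v, -, rfl⟩
  · induction b with
    | _ v w =>
      obtain ⟨x, hxv, hxw⟩ := (M.adj_sub he).2
      exact ⟨x, by simp [hxv, hxw]⟩
  · obtain ⟨x, hx⟩ := hS v
    exact ⟨x, by simp [Sym2.diag, hx]⟩

theorem exists_hittingSet_encard_le_encard_matchingBlocks (hS : ∀ v, (S v).Nonempty)
    {M : (intersectionGraph S).Subgraph} (hM : M.verts ⊆ M.support) :
    ∃ H ⊆ ⋃ v, S v, H.encard ≤ (matchingBlocks M).encard ∧ ∀ v, (H ∩ S v).Nonempty := by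
  choose p hp using fun b : matchingBlocks M => exists_forall_mem_of_mem_matchingBlocks hS b.2
  refine ⟨Set.range p, ?_, ?_, fun v => ?_⟩
  · rintro _ ⟨b, rfl⟩
    exact Set.mem_iUnion_of_mem _ (hp b _ (Sym2.out_fst_mem b.1))
  · rw [← Set.image_univ]
    exact (Set.encard_image_le p _).trans_eq (Set.encard_univ _)
  · obtain ⟨b, hb, hv⟩ := exists_mem_matchingBlocks hM v
    exact ⟨p ⟨b, hb⟩, ⟨_, rfl⟩, hp _ v hv⟩

theorem exists_isMatching_encard_matchingBlocks_le (hS : ∀ x, {v | x ∈ S v}.encard ≤ 2)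
    {H : Set α} (hH : ∀ v, (H ∩ S v).Nonempty) :
    ∃ M : (intersectionGraph S).Subgraph,
      M.IsMatching ∧ (matchingBlocks M).encard ≤ H.encard := by
  choose f hfH hfS using hH
  have adj_of_eq (v w : V) (hvw : v ≠ w) (h : f v = f w) : (intersectionGraph S).Adj v w :=
    ⟨hvw, f v, hfS v, h ▸ hfS w⟩
  have fiber_le_two (x : α) : {v | f v = x}.encard ≤ 2 :=
    (Set.encard_le_encard fun v (hv : f v = x) => hv ▸ hfS v).trans (hS x)
  have hM := isMatching_fiberSubgraph adj_of_eq fiber_le_two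
  refine ⟨fiberSubgraph f adj_of_eq, hM, ?_⟩
  exact (encard_matchingBlocks_le_encard_range hM fun _ _ hvw h => ⟨hvw, h⟩).trans
    (Set.encard_le_encard (Set.range_subset_iff.2 hfH))

theorem hittingSet_iff_matching_general (hne : ∀ v, (S v).Nonempty)
    (hS : ∀ x, {v | x ∈ S v}.encard ≤ 2) (k : ℕ∞) :
    (∃ H ⊆ ⋃ v, S v, H.encard ≤ k ∧ ∀ v, (H ∩ S v).Nonempty) ↔
    (∃ M : (intersectionGraph S).Subgraph, M.IsMatching ∧
      M.edgeSet.encard + M.vertsᶜ.encard ≤ k) := by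
  simp only [← encard_matchingBlocks]
  constructor
  · rintro ⟨H, -, hk, hH⟩
    obtain ⟨M, hM, hMH⟩ := exists_isMatching_encard_matchingBlocks_le hS hH
    exact ⟨M, hM, hMH.trans hk⟩
  · rintro ⟨M, hM, hk⟩
    obtain ⟨H, hsub, hHM, hH⟩ :=
      exists_hittingSet_encard_le_encard_matchingBlocks hne hM.support_eq_verts.ge
    exact ⟨H, hsub, hHM.trans hk, hH⟩

end IntersectionGraph

theorem encard_add_encard_le_coe_iff {α β : Type*} {s : Set α} {t : Set β} [Finite s] [Finite t]
    {k : ℕ} : s.encard + t.encard ≤ k ↔ s.ncard + t.ncard ≤ k := by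
  rw [← s.coe_ncard_eq_encard, ← t.coe_ncard_eq_encard]
  norm_cast

section TwoFamilies

open scoped Function

theorem encard_setOf_mem_le_one {ι α : Type*} {s : ι → Set α} (hs : Pairwise (Disjoint on s))
    (x : α) : {i | x ∈ s i}.encard ≤ 1 :=
  Set.encard_le_one_iff_subsingleton.2 (subsingleton_setOfPred_mem_iff_pairwise_disjoint.2 hs x)

theorem encard_setOf_mem_sumElim_le_two {ι κ α : Type*} {s : ι → Set α} {t : κ → Set α}
    (hs : Pairwise (Disjoint on s)) (ht : Pairwise (Disjoint on t))
    (x : α) : {v | x ∈ Sum.elim s t v}.encard ≤ 2 :=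
  calc
    {v | x ∈ Sum.elim s t v}.encard
      = (Sum.inl '' {i | x ∈ s i} ∪ Sum.inr '' {j | x ∈ t j}).encard := by
        congr 1
        ext (i | j) <;> simp
    _ ≤ (Sum.inl '' {i | x ∈ s i}).encard + (Sum.inr '' {j | x ∈ t j}).encard :=
        Set.encard_union_le _ _
    _ = {i | x ∈ s i}.encard + {j | x ∈ t j}.encard := by
        rw [Sum.inl_injective.encard_image, Sum.inr_injective.encard_image]
    _ ≤ 1 + 1 := add_le_add (encard_setOf_mem_le_one hs x) (encard_setOf_mem_le_one ht x)
    _ = 2 := one_add_one_eq_two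

variable {U : Type*} {C₁ C₂ : Finset (Finset U)}

/-- The members of `C₁` and `C₂` as one family of sets indexed by the vertices of `GM C₁ C₂`. A set
lying in both `C₁` and `C₂` occurs at two indices. -/
def sumFamily (C₁ C₂ : Finset (Finset U)) : {A // A ∈ C₁} ⊕ {B // B ∈ C₂} → Set U :=
  Sum.elim (fun A => A.1) (fun B => B.1)

theorem forall_sumFamily {p : Set U → Prop} :
    (∀ v, p (sumFamily C₁ C₂ v)) ↔ (∀ A ∈ C₁, p A) ∧ ∀ B ∈ C₂, p B := by
  simp [sumFamily]

theorem pairwise_disjoint_coe_subtype {C : Finset (Finset U)}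
    (hC : ∀ A ∈ C, ∀ B ∈ C, A ≠ B → Disjoint A B) :
    Pairwise (Disjoint on fun A : {A // A ∈ C} => (A.1 : Set U)) :=
  fun A B hAB => Finset.disjoint_coe.2 (hC A A.2 B B.2 (Subtype.coe_ne_coe.2 hAB))

theorem GM_eq_intersectionGraph [DecidableEq U]
    (h₁ : Pairwise (Disjoint on fun A : {A // A ∈ C₁} => (A.1 : Set U)))
    (h₂ : Pairwise (Disjoint on fun B : {B // B ∈ C₂} => (B.1 : Set U))) :
    GM C₁ C₂ = intersectionGraph (sumFamily C₁ C₂) := by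
  have inter_nonempty_iff (A B : Finset U) : (A ∩ B).Nonempty ↔ ((A : Set U) ∩ B).Nonempty := by
    rw [← Finset.coe_inter, Finset.coe_nonempty]
  ext (A | A) (B | B)
  · have inter_eq_empty (hAB : A ≠ B) : (A.1 ∩ B.1 : Set U) = ∅ :=
      Set.disjoint_iff_inter_eq_empty.1 (h₁ hAB)
    simpa [GM, intersectionGraph, sumFamily, Set.not_nonempty_iff_eq_empty] using inter_eq_empty
  · simp [GM, intersectionGraph, sumFamily, inter_nonempty_iff]
  · simp [GM, intersectionGraph, sumFamily, inter_nonempty_iff, Set.inter_comm]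
  · have inter_eq_empty (hAB : A ≠ B) : (A.1 ∩ B.1 : Set U) = ∅ :=
      Set.disjoint_iff_inter_eq_empty.1 (h₂ hAB)
    simpa [GM, intersectionGraph, sumFamily, Set.not_nonempty_iff_eq_empty] using inter_eq_empty

theorem exists_finset_hittingSet_iff [DecidableEq U] (k : ℕ) :
    (∃ H : Finset U, H ⊆ (C₁ ∪ C₂).biUnion id ∧ H.card ≤ k ∧
      ∀ A ∈ C₁ ∪ C₂, (H ∩ A).Nonempty) ↔
    ∃ H ⊆ ⋃ v, sumFamily C₁ C₂ v, H.encard ≤ k ∧ ∀ v, (H ∩ sumFamily C₁ C₂ v).Nonempty := by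
  have biUnion_eq : ((C₁ ∪ C₂).biUnion id : Set U) = ⋃ v, sumFamily C₁ C₂ v := by
    ext x
    simp [sumFamily, or_and_right, exists_or]
  have meets_iff (H : Finset U) : (∀ A ∈ C₁ ∪ C₂, (H ∩ A).Nonempty) ↔
      ∀ v, ((H : Set U) ∩ sumFamily C₁ C₂ v).Nonempty := by
    rw [forall_sumFamily (p := fun A => ((H : Set U) ∩ A).Nonempty)]
    simp only [← Finset.coe_inter, Finset.coe_nonempty, Finset.forall_mem_union]
  simp only [meets_iff, ← Finset.coe_subset, biUnion_eq]
  constructor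
  · rintro ⟨H, hsub, hk, hH⟩
    exact ⟨H, hsub, by simpa using hk, hH⟩
  · rintro ⟨H, hsub, hk, hH⟩
    lift H to Finset U using Set.finite_of_encard_le_coe hk
    exact ⟨H, hsub, by simpa using hk, hH⟩

end TwoFamilies

/-- For families `C₁`, `C₂` of nonempty finite sets, pairwise disjoint within each family,
there is a hitting set `H ⊆ ⋃ (C₁ ∪ C₂)` of size at most `k` meeting every member of
`C₁ ∪ C₂` iff the bipartite graph `G_M` has a matching `M` with
`|M| + |V(G_M) ∖ V(M)| ≤ k`. -/
theorem hittingSet_iff_matching {U : Type*} [DecidableEq U]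
    (C₁ C₂ : Finset (Finset U))
    (h1ne : ∀ A ∈ C₁, A.Nonempty) (h2ne : ∀ B ∈ C₂, B.Nonempty)
    (h1disj : ∀ A ∈ C₁, ∀ A' ∈ C₁, A ≠ A' → Disjoint A A')
    (h2disj : ∀ B ∈ C₂, ∀ B' ∈ C₂, B ≠ B' → Disjoint B B')
    (k : ℕ) :
    (∃ H : Finset U, H ⊆ (C₁ ∪ C₂).biUnion id ∧ H.card ≤ k ∧
      ∀ A ∈ C₁ ∪ C₂, (H ∩ A).Nonempty) ↔
    (∃ M : (GM C₁ C₂).Subgraph, M.IsMatching ∧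
      M.edgeSet.ncard + M.vertsᶜ.ncard ≤ k) := by
  have disj₁ := pairwise_disjoint_coe_subtype h1disj
  have disj₂ := pairwise_disjoint_coe_subtype h2disj
  rw [exists_finset_hittingSet_iff, GM_eq_intersectionGraph disj₁ disj₂,
    hittingSet_iff_matching_general (forall_sumFamily.2 ⟨h1ne, h2ne⟩)
      (encard_setOf_mem_sumElim_le_two disj₁ disj₂)]
  simp only [encard_add_encard_le_coe_iff]
end

section
/- Let G be a simple graph, let v and h be two distinct vertices of G, and suppose G contains at least k+2 internally vertex-disjoint paths between v and h, each of length at least 2. Then every feedback vertex set S of G with |S| ≤ k contains v or contains h. -/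
open SimpleGraph

/-!
A vertex of `S` other than the common ends `v`, `h` lies on at most one of the paths. So if `S`
misses `v` and `h`, then all but at most `|S|` of the paths avoid `S`, and two of those that do are
distinct `v`-`h` paths in the forest `G - S`.
-/

section SetFamily

variable {ι α : Type*} {A : ι → Set α} {S : Set α}

lemma encard_setOf_not_disjoint_le (hA : Pairwise fun i j => Disjoint S (A i ∩ A j)) :
    {i | ¬Disjoint S (A i)}.encard ≤ S.encard := by
  have hmeet : ∀ i : {i | ¬Disjoint S (A i)}, ∃ x ∈ S, x ∈ A i :=
    fun i => Set.not_disjoint_iff.mp i.2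
  choose f hfS hfA using hmeet
  have hinj : Function.Injective f := by
    intro i j hij
    by_contra hne
    exact Set.disjoint_left.mp (hA (Subtype.coe_ne_coe.mpr hne)) (hfS i) ⟨hfA i, hij ▸ hfA j⟩
  exact Function.Embedding.encard_le ⟨Set.codRestrict f S hfS, hinj.codRestrict hfS⟩

lemma nontrivial_setOf_disjoint (hA : Pairwise fun i j => Disjoint S (A i ∩ A j))
    (hcard : S.encard + 1 < ENat.card ι) : {i | Disjoint S (A i)}.Nontrivial := by
  rw [← Set.one_lt_encard_iff_nontrivial]
  by_contra! hle
  refine hcard.not_ge ?_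
  calc ENat.card ι = {i | ¬Disjoint S (A i)}.encard + {i | Disjoint S (A i)}.encard := by
        rw [← Set.encard_univ, ← Set.encard_add_encard_compl {i | Disjoint S (A i)}, add_comm,
          Set.compl_ofPred]
    _ ≤ S.encard + 1 := add_le_add (encard_setOf_not_disjoint_le hA) hle

end SetFamily

section Paths

variable {V : Type*} {G : SimpleGraph V} {u v : V}

lemma isPath_induce {p : G.Walk u v} (hp : p.IsPath) {s : Set V} (hs : ∀ x ∈ p.support, x ∈ s) :
    (p.induce s hs).IsPath :=
  .of_map (f := (Embedding.induce s).toHom) (by rwa [Walk.map_induce])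

lemma eq_of_isAcyclic_induce {s : Set V} (hG : (G.induce s).IsAcyclic) {p q : G.Walk u v}
    (hp : p.IsPath) (hq : q.IsPath) (hps : ∀ x ∈ p.support, x ∈ s)
    (hqs : ∀ x ∈ q.support, x ∈ s) : p = q := by
  have hind : p.induce s hps = q.induce s hqs :=
    congrArg Subtype.val <| (hG.subsingleton_path _ _).elim
      ⟨_, isPath_induce hp hps⟩ ⟨_, isPath_induce hq hqs⟩
  rw [← p.map_induce hps, hind, q.map_induce]

lemma exists_mem_support_ne_start_ne_end {p : G.Walk u v} (hp : p.IsPath) (hlen : 2 ≤ p.length) :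
    ∃ x ∈ p.support, x ≠ u ∧ x ≠ v := by
  refine ⟨p.getVert 1, p.getVert_mem_support 1, ?_, ?_⟩
  · rw [Ne, hp.getVert_eq_start_iff (by lia)]
    lia
  · rw [Ne, hp.getVert_eq_end_iff (by lia)]
    lia

end Paths

section DisjointPaths

variable {V ι : Type*} {G : SimpleGraph V} {u v : V} {P : ι → G.Walk u v}

/-- A family of walks between two fixed vertices is internally disjoint if different members meet
only at these two vertices. The family is indexed, so a single edge may be repeated in it. -/
def InternallyDisjoint (P : ι → G.Walk u v) : Prop :=
  Pairwise fun i j => ∀ x, x ∈ (P i).support → x ∈ (P j).support → x = u ∨ x = v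

namespace InternallyDisjoint

lemma injective (hP : InternallyDisjoint P) (hpath : ∀ i, (P i).IsPath)
    (hlen : ∀ i, 2 ≤ (P i).length) : Function.Injective P := by
  intro i j hij
  by_contra hne
  obtain ⟨x, hx, hxu, hxv⟩ := exists_mem_support_ne_start_ne_end (hpath i) (hlen i)
  exact (hP hne x hx (hij ▸ hx)).elim hxu hxv

lemma nontrivial_setOf_disjoint_support (hP : InternallyDisjoint P) {S : Set V} (hu : u ∉ S)
    (hv : v ∉ S) (hcard : S.encard + 1 < ENat.card ι) :
    {i | Disjoint S {x | x ∈ (P i).support}}.Nontrivial := by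
  refine nontrivial_setOf_disjoint (fun i j hij => Set.disjoint_left.mpr ?_) hcard
  rintro x hxS ⟨hxi, hxj⟩
  rcases hP hij x hxi hxj with rfl | rfl
  · exact hu hxS
  · exact hv hxS

end InternallyDisjoint

end DisjointPaths

theorem fvs_contains_v_or_h_general {V ι : Type*} {G : SimpleGraph V} {v h : V}
    {P : ι → G.Walk v h} (hpath : ∀ i, (P i).IsPath) (hinj : Function.Injective P)
    (hdisj : InternallyDisjoint P) {S : Set V} (hcard : S.encard + 1 < ENat.card ι)
    (hfvs : (G.induce Sᶜ).IsAcyclic) : v ∈ S ∨ h ∈ S := by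
  by_contra! ⟨hv, hh⟩
  obtain ⟨i, hi, j, hj, hij⟩ := hdisj.nontrivial_setOf_disjoint_support hv hh hcard
  have avoids {l} (hl : Disjoint S {x | x ∈ (P l).support}) : ∀ x ∈ (P l).support, x ∈ Sᶜ :=
    fun _ hx => Set.disjoint_right.mp hl hx
  exact hij <| hinj <|
    eq_of_isAcyclic_induce hfvs (hpath i) (hpath j) (avoids hi) (avoids hj)

/-- If a simple graph `G` contains at least `k+2` internally vertex-disjoint paths between
two distinct vertices `v` and `h`, each of length at least 2, then every feedback vertex set
of `G` of size at most `k` contains `v` or `h`. -/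
theorem fvs_contains_v_or_h {V : Type*} [Fintype V] [DecidableEq V] (G : SimpleGraph V)
    (v h : V) (hvh : v ≠ h) (k : ℕ)
    (P : Fin (k + 2) → G.Walk v h)
    (hpath : ∀ j, (P j).IsPath)
    (hlen : ∀ j, 2 ≤ (P j).length)
    (hdisj : ∀ j j', j ≠ j' → ∀ x, x ∈ (P j).support → x ∈ (P j').support →
      x = v ∨ x = h)
    (S : Finset V) (hS : S.card ≤ k)
    (hfvs : (G.induce (↑S : Set V)ᶜ).IsAcyclic) :
    v ∈ S ∨ h ∈ S := by
  have hP : InternallyDisjoint P := fun i j => hdisj i j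
  exact fvs_contains_v_or_h_general hpath (hP.injective hpath hlen) hP
    (by simpa using mod_cast (by lia : S.card + 1 < k + 2)) hfvs
end

section
/- Let G = (V, E_1, …, E_α) be an α-edge-colored graph, let u ∈ V, and let x ∈ V ∖ {u} be a vertex such that for every i ∈ {1, …, α}, every cycle of the color-i graph G_i that contains u also contains x. Let G' be the α-edge-colored graph obtained from G by splitting u into α new vertices u_1, …, u_α: the vertex set of G' is (V ∖ {u}) ∪ {u_1, …, u_α}, and for each i, every edge (u, y) ∈ E_i is replaced by the edge (u_i, y), all other edges being unchanged. Then for every nonnegative integer k, G has an α-simultaneous feedback vertex set of size at most k if and only if G' has an α-simultaneous feedback vertex set of size at most k. (Safeness of the Unravel operation, reduction rule α-SimFVS.R8; in the paper, x is a second vertex of the Intercept of a maximal degree-two path with a tuple of paths of the other colors.) -/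
/-!
In color `j`, every copy of `u` other than `u_j` is isolated in the split graph, so up to isolated
vertices each color graph is unchanged. Hence a set `S` of vertices works for `G` exactly when its
preimage under the projection merging the copies back into `u` works for the split graph. That
preimage has the size of `S` unless `u ∈ S`, when it contains all `α` copies; but then `u` can first
be exchanged for `x`, which lies on every cycle through `u`.
-/

open SimpleGraph

/-- The color-`j` graph obtained from `G` by splitting the vertex `u` into `α` copies
`u_1, …, u_α` (here the copies are the elements of `Fin α`): edges among vertices other
than `u` are unchanged, and every color-`j` edge `(u, y)` is replaced by `(u_j, y)`. -/
def SplitGraph {V : Type*} {α : ℕ} (G : Fin α → SimpleGraph V) (u : V) (j : Fin α) :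
    SimpleGraph ({x : V // x ≠ u} ⊕ Fin α) :=
  SimpleGraph.fromRel (fun a b =>
    (∃ x y : {x : V // x ≠ u}, a = Sum.inl x ∧ b = Sum.inl y ∧ (G j).Adj x.1 y.1) ∨
    (∃ y : {x : V // x ≠ u}, a = Sum.inl y ∧ b = Sum.inr j ∧ (G j).Adj u y.1))

section Acyclic

variable {V W : Type*} {G : SimpleGraph V}

theorem isAcyclic_induce_iff {s : Set V} :
    (G.induce s).IsAcyclic ↔
      ∀ ⦃a : V⦄ (c : G.Walk a a), c.IsCycle → ∃ v ∈ c.support, v ∉ s := by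
  constructor
  · intro h a c hc
    by_contra! hs
    exact h (c.induce s hs) (Walk.IsCycle.of_map (f := (Embedding.induce s).toHom)
      (by rwa [Walk.map_induce]))
  · intro h a c hc
    obtain ⟨v, hv, hvs⟩ := h _ (hc.map (f := (Embedding.induce s).toHom) Subtype.val_injective)
    obtain ⟨w, -, rfl⟩ := List.mem_map.1 (Walk.support_map _ c ▸ hv)
    exact hvs w.2

theorem isAcyclic_induce_inter_iff {s t : Set V} (ht : G.support ⊆ t) :
    (G.induce (s ∩ t)).IsAcyclic ↔ (G.induce s).IsAcyclic := by
  simp only [isAcyclic_induce_iff]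
  refine forall₃_congr fun a c hc => exists_congr fun v => and_congr_right fun hv => not_congr ?_
  exact and_iff_left (ht (mem_support_of_mem_walk_support c hc.not_nil hv))

theorem isAcyclic_induce_image_map_iff (f : V ↪ W) (s : Set V) :
    ((G.map f).induce (f '' s)).IsAcyclic ↔ (G.induce s).IsAcyclic := by
  let e : G.induce s ↪g G.map f := (Embedding.map f G).comp (Embedding.induce s)
  have range_e : Set.range e = f '' s :=
    (Set.range_comp f Subtype.val).trans (congrArg _ Subtype.range_coe)
  rw [← range_e, e.isoInduceRange.isAcyclic_iff]

theorem support_map_subset_range (f : V ↪ W) : (G.map f).support ⊆ Set.range f := by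
  rintro _ ⟨_, _, v, _, _, rfl, _⟩
  exact ⟨v, rfl⟩

theorem isAcyclic_induce_map_iff (f : V ↪ W) (s : Set W) :
    ((G.map f).induce s).IsAcyclic ↔ (G.induce (f ⁻¹' s)).IsAcyclic := by
  rw [← isAcyclic_induce_inter_iff (support_map_subset_range f),
    ← Set.image_preimage_eq_inter_range, isAcyclic_induce_image_map_iff]

end Acyclic

namespace SplitGraph

variable {V ι : Type*} (u : V)

/-- The projection from the split vertex set onto `V` that merges all copies of `u` back into
`u`. -/
def proj : {y : V // y ≠ u} ⊕ ι → V :=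
  Sum.elim Subtype.val fun _ => u

open Classical in
/-- The section of `proj u` sending `u` to its copy `u_j`. -/
noncomputable def copyEmb (j : ι) : V ↪ {y : V // y ≠ u} ⊕ ι where
  toFun v := if h : v = u then Sum.inr j else Sum.inl ⟨v, h⟩
  inj' := Function.LeftInverse.injective (g := proj u) fun v => by
    by_cases h : v = u <;> simp [proj, h]

@[simp]
theorem copyEmb_self (j : ι) : copyEmb u j u = Sum.inr j := by
  simp [copyEmb]

@[simp]
theorem copyEmb_coe (j : ι) (y : {y : V // y ≠ u}) : copyEmb u j y = Sum.inl y := by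
  simp [copyEmb, y.2]

theorem leftInverse_proj_copyEmb (j : ι) : Function.LeftInverse (proj u) (copyEmb u j) := by
  intro v
  by_cases h : v = u <;> simp [copyEmb, proj, h]

theorem injOn_proj_preimage {S : Set V} (hu : u ∉ S) :
    Set.InjOn (proj (ι := ι) u) (proj u ⁻¹' S) := by
  rintro (a | i) ha (b | j) hb hab
  · exact congrArg Sum.inl (Subtype.ext hab)
  · exact absurd hb hu
  · exact absurd ha hu
  · exact absurd ha hu

theorem eq_map_copyEmb {α : ℕ} (G : Fin α → SimpleGraph V) (j : Fin α) :
    SplitGraph G u j = (G j).map (copyEmb u j) := by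
  ext a b
  constructor
  · simp only [SplitGraph, fromRel_adj]
    rintro ⟨hne, (⟨y, z, rfl, rfl, h⟩ | ⟨y, rfl, rfl, h⟩) |
      (⟨y, z, rfl, rfl, h⟩ | ⟨y, rfl, rfl, h⟩)⟩
    · exact ⟨hne, y, z, h, copyEmb_coe u j y, copyEmb_coe u j z⟩
    · exact ⟨hne, y, u, h.symm, copyEmb_coe u j y, copyEmb_self u j⟩
    · exact ⟨hne, z, y, h.symm, copyEmb_coe u j z, copyEmb_coe u j y⟩
    · exact ⟨hne, u, y, h, copyEmb_self u j, copyEmb_coe u j y⟩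
  · rintro ⟨hne, v, w, h, rfl, rfl⟩
    refine ⟨hne, ?_⟩
    by_cases hv : v = u <;> by_cases hw : w = u
    · exact absurd (hv.trans hw.symm) h.ne
    · exact .inr (.inr ⟨⟨w, hw⟩, copyEmb_coe u j ⟨w, hw⟩, hv ▸ copyEmb_self u j, hv ▸ h⟩)
    · exact .inl (.inr ⟨⟨v, hv⟩, copyEmb_coe u j ⟨v, hv⟩, hw ▸ copyEmb_self u j, hw ▸ h.symm⟩)
    · exact .inl (.inl ⟨⟨v, hv⟩, ⟨w, hw⟩, copyEmb_coe u j ⟨v, hv⟩, copyEmb_coe u j ⟨w, hw⟩, h⟩)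

end SplitGraph

namespace IsSimFVS

variable {V : Type*} {α : ℕ} {G : Fin α → SimpleGraph V} {S T : Set V}

theorem mono (hS : IsSimFVS G S) (hST : S ⊆ T) : IsSimFVS G T := fun i =>
  (hS i).embedding (induceHomOfLE _ (Set.compl_subset_compl.2 hST))

theorem exchange {u x : V} (hS : IsSimFVS G S)
    (hx : ∀ i, ∀ (a : V) (c : (G i).Walk a a), c.IsCycle → u ∈ c.support → x ∈ c.support) :
    IsSimFVS G (insert x (S \ {u})) := by
  refine fun i => isAcyclic_induce_iff.2 fun a c hc => ?_
  obtain ⟨v, hv, hvS⟩ := isAcyclic_induce_iff.1 (hS i) c hc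
  by_cases hvu : v = u
  · exact ⟨x, hx i a c hc (hvu ▸ hv), by simp⟩
  · exact ⟨v, hv, by simp_all⟩

theorem exists_card_le_notMem {S : Finset V} {u x : V} (hS : IsSimFVS G (S : Set V)) (hxu : x ≠ u)
    (hx : ∀ i, ∀ (a : V) (c : (G i).Walk a a), c.IsCycle → u ∈ c.support → x ∈ c.support) :
    ∃ R : Finset V, R.card ≤ S.card ∧ u ∉ R ∧ IsSimFVS G (R : Set V) := by
  classical
  by_cases hu : u ∈ S
  · refine ⟨insert x (S.erase u), ?_, by simp [hxu.symm], by simpa using hS.exchange hx⟩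
    calc (insert x (S.erase u)).card ≤ (S.erase u).card + 1 := Finset.card_insert_le _ _
      _ = S.card := Finset.card_erase_add_one hu
  · exact ⟨S, le_rfl, hu, hS⟩

theorem splitGraph_preimage_proj_iff (u : V) :
    IsSimFVS (SplitGraph G u) (SplitGraph.proj u ⁻¹' S) ↔ IsSimFVS G S := by
  refine forall_congr' fun j => ?_
  rw [SplitGraph.eq_map_copyEmb, isAcyclic_induce_map_iff, Set.preimage_compl,
    (SplitGraph.leftInverse_proj_copyEmb u j).preimage_preimage]

theorem image_proj {u : V} {S' : Set ({y : V // y ≠ u} ⊕ Fin α)}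
    (hS' : IsSimFVS (SplitGraph G u) S') : IsSimFVS G (SplitGraph.proj u '' S') :=
  (splitGraph_preimage_proj_iff u).1 (hS'.mono (Set.subset_preimage_image _ _))

end IsSimFVS

theorem unravel_safe_general {V : Type*} {α : ℕ}
    (G : Fin α → SimpleGraph V) (u x : V) (hxu : x ≠ u)
    (hx : ∀ i : Fin α, ∀ (a : V) (c : (G i).Walk a a), c.IsCycle →
      u ∈ c.support → x ∈ c.support)
    (k : ℕ) :
    (∃ S : Finset V, S.card ≤ k ∧ IsSimFVS G ↑S) ↔
    (∃ S' : Finset ({y : V // y ≠ u} ⊕ Fin α), S'.card ≤ k ∧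
      IsSimFVS (fun j => SplitGraph G u j) ↑S') := by
  classical
  constructor
  · rintro ⟨S, hSk, hS⟩
    obtain ⟨R, hRS, huR, hR⟩ := hS.exists_card_le_notMem hxu hx
    have hinj := SplitGraph.injOn_proj_preimage (ι := Fin α) u (S := R) (by simpa using huR)
    refine ⟨R.preimage (SplitGraph.proj u) hinj, ?_, ?_⟩
    · calc (R.preimage (SplitGraph.proj u) hinj).card
        _ ≤ R.card := Finset.card_le_card_of_injOn (SplitGraph.proj u)
          (fun _ => Finset.mem_preimage.1) (by rwa [Finset.coe_preimage])
        _ ≤ k := hRS.trans hSk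
    · rw [Finset.coe_preimage]
      exact (IsSimFVS.splitGraph_preimage_proj_iff u).2 hR
  · rintro ⟨S', hSk', hS'⟩
    refine ⟨S'.image (SplitGraph.proj u), Finset.card_image_le.trans hSk', ?_⟩
    rw [Finset.coe_image]
    exact hS'.image_proj

/-- Safeness of the Unravel operation (reduction rule α-SimFVS.R8): if `x ≠ u` is a vertex
such that for every color `i`, every cycle of `G i` containing `u` also contains `x`, then
splitting `u` into `α` private copies (one per color) preserves the existence of an
α-simultaneous feedback vertex set of size at most `k`. -/
theorem unravel_safe {V : Type*} [Fintype V] [DecidableEq V] {α : ℕ}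
    (G : Fin α → SimpleGraph V) (u x : V) (hxu : x ≠ u)
    (hx : ∀ i : Fin α, ∀ (a : V) (c : (G i).Walk a a), c.IsCycle →
      u ∈ c.support → x ∈ c.support)
    (k : ℕ) :
    (∃ S : Finset V, S.card ≤ k ∧ IsSimFVS G ↑S) ↔
    (∃ S' : Finset ({y : V // y ≠ u} ⊕ Fin α), S'.card ≤ k ∧
      IsSimFVS (fun j => SplitGraph G u j) ↑S') := by
  exact unravel_safe_general G u x hxu hx k
end

section
/- Let U be a finite universe and let F = F_1 ∪ … ∪ F_α be a family of nonempty subsets of U such that every element of U belongs to at least one set of F and, for each i ∈ {1, …, α}, the sets within the subfamily F_i are pairwise disjoint. Then there exists an α-edge-colored graph G on at most 2|U|·|F| vertices such that for every positive integer k, F has a hitting set of size at most k if and only if G has an α-simultaneous feedback vertex set of size at most k. (Combinatorial core of the reduction proving that O(log n)-SimFVS is W[1]-hard.) -/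
open SimpleGraph

/-!
A permutation `σ` of `V` gives a graph with edges `{x, σ x}`, in which the orbits of length at least
three are cycles. Deleting `S` makes this graph acyclic as soon as every orbit of non-fixed points
meets `S`: rank each vertex by the number of steps it needs to reach `S` or a fixed point, and
observe that a vertex of maximal rank on a cycle would have two neighbors of no larger rank, whereas
only its successor can be one. Hence pairwise disjoint blocks of size at least three are realized
as the cycles of a graph whose feedback vertex sets are exactly the sets meeting every block.

For the reduction, each set of the family receives two private new vertices, which brings its size
to at least three and preserves disjointness within a color. A private vertex in a feedback vertex
set can be traded for an element of the set it belongs to. If one element already hits the whole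
family, the bound `2|U||F|` may leave no room for these vertices, but then the empty graph serves.
-/

open scoped Finset

universe u

section FeedbackVertexSet

variable {V ι : Type*}

theorem isAcyclic_of_forall_subsingleton_adj_le {β : Type*} [LinearOrder β] {G : SimpleGraph V}
    (r : V → β) (hr : ∀ x, {y | G.Adj x y ∧ r y ≤ r x}.Subsingleton) : G.IsAcyclic := by
  classical
  intro v c hc
  obtain ⟨x, hx, hmax⟩ := c.support.toFinset.exists_max_image r ⟨v, by simp⟩
  rw [List.mem_toFinset] at hx
  have hle : ∀ y ∈ (c.rotate x hx).support, r y ≤ r x := fun y hy =>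
    hmax y (List.mem_toFinset.mpr ((c.mem_support_rotate_iff x hx).mp hy))
  have hcycle : (c.rotate x hx).IsCycle := hc.rotate hx
  exact hcycle.snd_ne_penultimate <| hr x
    ⟨Walk.adj_snd hcycle.not_nil, hle _ (Walk.getVert_mem_support _ _)⟩
    ⟨(Walk.adj_penultimate hcycle.not_nil).symm, hle _ (Walk.getVert_mem_support _ _)⟩

/-- The graph of a self-map `f`, joining each `x` to `f x`. Fixed points of `f` contribute no
edge. -/
def functionalGraph (f : V → V) : SimpleGraph V :=
  SimpleGraph.fromRel fun x y => f x = y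

theorem isAcyclic_induce_compl_functionalGraph {f : V → V} {S : Set V}
    (hS : ∀ x, ∃ n, f^[n] x ∈ S ∪ Function.fixedPoints f) :
    ((functionalGraph f).induce Sᶜ).IsAcyclic := by
  classical
  let rank (x : V) : ℕ := Nat.find (hS x)
  have rank_eq_succ {x : V} (hxS : x ∉ S) (hx : f x ≠ x) : rank x = rank (f x) + 1 :=
    Nat.find_comp_succ (hS x) (hS (f x)) (not_or.mpr ⟨hxS, hx⟩)
  have eq_apply {x y : V} (hy : y ∉ S) (hadj : (functionalGraph f).Adj x y)
      (hle : rank y ≤ rank x) : y = f x := by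
    obtain ⟨hxy, rfl | rfl⟩ := hadj
    · rfl
    · have := rank_eq_succ hy hxy
      omega
  refine isAcyclic_of_forall_subsingleton_adj_le (fun x : ↥Sᶜ => rank x) ?_
  rintro x y ⟨hy, hyx⟩ z ⟨hz, hzx⟩
  exact Subtype.ext ((eq_apply y.2 hy hyx).trans (eq_apply z.2 hz hzx).symm)

theorem cycleGraph_isContained_induce_functionalGraph {σ : Equiv.Perm V} {s : Finset V}
    (hσ : σ.IsCycleOn s) (hs : s.Nonempty) :
    cycleGraph #s ⊑ (functionalGraph σ).induce (s : Set V) := by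
  obtain ⟨a, ha⟩ := hs
  let e (i : Fin #s) : (s : Set V) := ⟨(σ ^ (i : ℕ)) a, (hσ.1.perm_pow i).mapsTo ha⟩
  have he : Function.Injective e := fun i j hij => Fin.ext <|
    ((hσ.pow_apply_eq_pow_apply ha).mp (congrArg Subtype.val hij)).eq_of_lt_of_lt i.2 j.2
  have apply_eq {i j : Fin #s} (hij : (j - i).val = 1) : σ (e i) = e j := by
    rw [Fin.val_sub] at hij
    have hmod : i + 1 ≡ j [MOD #s] := by
      calc (i : ℕ) + 1 ≡ i + (#s - i + j) [MOD #s] := by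
            rw [← hij]; exact (Nat.mod_modEq _ _).add_left _
        _ = #s + j := by omega
        _ ≡ j [MOD #s] := by simp [Nat.ModEq]
    exact (Equiv.Perm.mul_apply _ _ a).symm.trans <|
      pow_succ' σ (i : ℕ) ▸ (hσ.pow_apply_eq_pow_apply ha).mpr hmod
  refine ⟨⟨⟨e, fun {i j} hij => ⟨fun h => hij.ne (he (Subtype.ext h)), ?_⟩⟩, he⟩⟩
  exact (cycleGraph_adj'.mp hij).symm.imp apply_eq apply_eq

theorem exists_mem_of_isAcyclic_induce_compl_functionalGraph {σ : Equiv.Perm V} {s : Finset V}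
    {S : Set V} (hσ : σ.IsCycleOn s) (hs : 3 ≤ #s)
    (hS : ((functionalGraph σ).induce Sᶜ).IsAcyclic) : ∃ x ∈ s, x ∈ S := by
  by_contra! hsS
  have hcycle : cycleGraph #s ⊑ (functionalGraph σ).induce (s : Set V) :=
    cycleGraph_isContained_induce_functionalGraph hσ (Finset.card_pos.mp (by omega))
  exact isAcyclic_iff_free_cycleGraph.mp hS _ hs
    (hcycle.trans ⟨(induceHomOfLE _ hsS).toCopy⟩)

theorem isCycleOn_congr {σ τ : Equiv.Perm V} {s : Finset V} (hσ : σ.IsCycleOn s)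
    (h : Set.EqOn σ τ s) : τ.IsCycleOn s := by
  refine ⟨hσ.1.congr h, fun x hx y hy => ?_⟩
  obtain ⟨n, -, rfl⟩ := hσ.exists_pow_eq hx hy
  have hpow (n : ℕ) : (τ ^ n) x = (σ ^ n) x := by
    induction n with
    | zero => rfl
    | succ n ih =>
      rw [pow_succ', pow_succ', Equiv.Perm.mul_apply, Equiv.Perm.mul_apply, ih,
        h ((hσ.1.perm_pow n).mapsTo hx)]
  exact ⟨n, hpow n⟩

theorem exists_blocks_of_pairwiseDisjoint {B : ι → Finset V} {J : Set ι}
    (hB : J.PairwiseDisjoint B) :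
    ∃ block : V → Finset V, (∀ x, x ∈ block x) ∧ (∀ x, ∀ y ∈ block x, block y = block x) ∧
      (∀ j ∈ J, ∀ x ∈ B j, block x = B j) ∧ ∀ x, (∀ j ∈ J, x ∉ B j) → block x = {x} := by
  classical
  let block (x : V) : Finset V := if h : ∃ j ∈ J, x ∈ B j then B h.choose else {x}
  have block_eq {j : ι} (hj : j ∈ J) {x : V} (hx : x ∈ B j) : block x = B j := by
    have h : ∃ j ∈ J, x ∈ B j := ⟨j, hj, hx⟩
    simp only [block, dif_pos h, hB.elim_finset h.choose_spec.1 hj x h.choose_spec.2 hx]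
  have block_eq_singleton {x : V} (hx : ∀ j ∈ J, x ∉ B j) : block x = {x} :=
    dif_neg (by simpa using hx)
  refine ⟨block, fun x => ?_, fun x y hy => ?_, fun j hj x => block_eq hj,
    fun x => block_eq_singleton⟩
  · by_cases! h : ∃ j ∈ J, x ∈ B j
    · obtain ⟨j, hj, hx⟩ := h
      rwa [block_eq hj hx]
    · rw [block_eq_singleton h, Finset.mem_singleton]
  · by_cases! h : ∃ j ∈ J, x ∈ B j
    · obtain ⟨j, hj, hx⟩ := h
      rw [block_eq hj hx] at hy ⊢
      exact block_eq hj hy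
    · rw [block_eq_singleton h, Finset.mem_singleton] at hy
      rw [hy]

theorem exists_perm_forall_isCycleOn_block {block : V → Finset V} (mem_block : ∀ x, x ∈ block x)
    (block_eq : ∀ x, ∀ y ∈ block x, block y = block x) :
    ∃ σ : Equiv.Perm V, ∀ x, σ.IsCycleOn (block x) := by
  choose cyc hcyc _ using fun s : Finset V => s.finite_toSet.countable.exists_cycleOn
  have block_cyc (x : V) : block (cyc (block x) x) = block x :=
    block_eq x _ ((hcyc _).1.mapsTo (mem_block x))
  have block_cyc_symm (x : V) : block ((cyc (block x)).symm x) = block x :=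
    block_eq x _ ((hcyc _).inv.1.mapsTo (mem_block x))
  let σ : Equiv.Perm V :=
    { toFun := fun x => cyc (block x) x
      invFun := fun x => (cyc (block x)).symm x
      left_inv := fun x => by simp only [block_cyc, Equiv.symm_apply_apply]
      right_inv := fun x => by simp only [block_cyc_symm, Equiv.apply_symm_apply] }
  exact ⟨σ, fun x => isCycleOn_congr (hcyc (block x)) fun y hy =>
    congrArg (cyc · y) (block_eq x y hy).symm⟩

theorem exists_perm_forall_isCycleOn {B : ι → Finset V} {J : Set ι} (hB : J.PairwiseDisjoint B) :
    ∃ σ : Equiv.Perm V, (∀ j ∈ J, σ.IsCycleOn (B j)) ∧ ∀ x, (∀ j ∈ J, x ∉ B j) → σ x = x := by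
  obtain ⟨block, mem_block, block_eq, block_eq_of_mem, block_eq_singleton⟩ :=
    exists_blocks_of_pairwiseDisjoint hB
  obtain ⟨σ, hσ⟩ := exists_perm_forall_isCycleOn_block mem_block block_eq
  refine ⟨σ, fun j hj => ?_, fun x hx => ?_⟩
  · obtain hempty | ⟨x, hx⟩ := (B j).eq_empty_or_nonempty
    · rw [hempty, Finset.coe_empty]
      exact Equiv.Perm.isCycleOn_empty
    · exact block_eq_of_mem j hj x hx ▸ hσ x
  · have hcycle := hσ x
    rwa [block_eq_singleton x hx, Finset.coe_singleton, Equiv.Perm.isCycleOn_singleton] at hcycle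

theorem exists_isAcyclic_induce_compl_iff {B : ι → Finset V} {J : Set ι}
    (hB : J.PairwiseDisjoint B) (hcard : ∀ j ∈ J, 3 ≤ #(B j)) :
    ∃ G : SimpleGraph V, ∀ S : Set V,
      (G.induce Sᶜ).IsAcyclic ↔ ∀ j ∈ J, ∃ x ∈ B j, x ∈ S := by
  obtain ⟨σ, hcycle, hfix⟩ := exists_perm_forall_isCycleOn hB
  refine ⟨functionalGraph σ, fun S => ⟨fun hS j hj =>
    exists_mem_of_isAcyclic_induce_compl_functionalGraph (hcycle j hj) (hcard j hj) hS,
    fun hS => isAcyclic_induce_compl_functionalGraph fun x => ?_⟩⟩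
  by_cases! hx : ∃ j ∈ J, x ∈ B j
  · obtain ⟨j, hj, hxj⟩ := hx
    obtain ⟨y, hyj, hyS⟩ := hS j hj
    obtain ⟨n, -, rfl⟩ := (hcycle j hj).exists_pow_eq hxj hyj
    exact ⟨n, .inl (by rwa [Equiv.Perm.iterate_eq_pow])⟩
  · exact ⟨0, .inr (hfix x hx)⟩

theorem exists_isSimFVS_iff {α : ℕ} {B : ι → Finset V} {J : Fin α → Set ι}
    (hB : ∀ i, (J i).PairwiseDisjoint B) (hcard : ∀ i, ∀ j ∈ J i, 3 ≤ #(B j)) :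
    ∃ G : Fin α → SimpleGraph V, ∀ S : Set V,
      IsSimFVS G S ↔ ∀ i, ∀ j ∈ J i, ∃ x ∈ B j, x ∈ S := by
  choose G hG using fun i => exists_isAcyclic_induce_compl_iff (hB i) (hcard i)
  exact ⟨G, fun S => forall_congr' fun i => hG i S⟩

end FeedbackVertexSet

section Padding

variable {U ι : Type*} {A : ι → Finset U}

/-- The set `A i` enlarged by two private elements `(i, false)` and `(i, true)`, so that every
nonempty set of a family becomes large enough to be the vertex set of a cycle. -/
def padded (A : ι → Finset U) (i : ι) : Finset (U ⊕ ι × Bool) :=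
  (A i).disjSum ({i} ×ˢ Finset.univ)

theorem card_padded (A : ι → Finset U) (i : ι) : #(padded A i) = #(A i) + 2 := by
  simp [padded]

theorem pairwiseDisjoint_padded {J : Set ι} (hA : J.PairwiseDisjoint A) :
    J.PairwiseDisjoint (padded A) := by
  intro i hi j hj hij
  rw [Function.onFun, Finset.disjoint_left]
  rintro (u | ⟨l, b⟩) hui huj
  · exact Finset.disjoint_left.mp (hA hi hj hij)
      (Finset.inl_mem_disjSum.mp hui) (Finset.inl_mem_disjSum.mp huj)
  · simp only [padded, Finset.inr_mem_disjSum, Finset.mem_product, Finset.mem_singleton] at hui huj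
    exact hij (hui.1.symm.trans huj.1)

theorem exists_map_padded_mem (hA : ∀ i, (A i).Nonempty) :
    ∃ φ : U ⊕ ι × Bool → U, ∀ i, ∀ x ∈ padded A i, φ x ∈ A i := by
  choose a ha using hA
  refine ⟨Sum.elim id fun x => a x.1, ?_⟩
  rintro i (u | ⟨j, b⟩) hx
  · exact Finset.inl_mem_disjSum.mp hx
  · simp only [padded, Finset.inr_mem_disjSum, Finset.mem_product, Finset.mem_singleton] at hx
    exact hx.1 ▸ ha j

theorem exists_hitting_iff_exists_hitting_padded [Finite U] [Finite ι] [DecidableEq U]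
    (hA : ∀ i, (A i).Nonempty) (k : ℕ) :
    (∃ S : Finset U, #S ≤ k ∧ ∀ i, (S ∩ A i).Nonempty) ↔
      ∃ T : Set (U ⊕ ι × Bool), T.ncard ≤ k ∧ ∀ i, ∃ x ∈ padded A i, x ∈ T := by
  constructor
  · rintro ⟨S, hcard, hS⟩
    refine ⟨Sum.inl '' S, ?_, fun i => ?_⟩
    · rwa [Set.ncard_image_of_injective _ Sum.inl_injective, Set.ncard_coe_finset]
    · obtain ⟨u, hu⟩ := hS i
      rw [Finset.mem_inter] at hu
      exact ⟨Sum.inl u, Finset.inl_mem_disjSum.mpr hu.2, u, hu.1, rfl⟩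
  · rintro ⟨T, hcard, hT⟩
    obtain ⟨φ, hφ⟩ := exists_map_padded_mem hA
    refine ⟨T.toFinite.toFinset.image φ, ?_, fun i => ?_⟩
    · rw [Set.ncard_eq_toFinset_card T] at hcard
      exact Finset.card_image_le.trans hcard
    · obtain ⟨x, hx, hxT⟩ := hT i
      exact ⟨φ x, Finset.mem_inter.mpr
        ⟨Finset.mem_image_of_mem φ (T.toFinite.mem_toFinset.mpr hxT), hφ i x hx⟩⟩

theorem exists_graph_forall_hitting_iff_isSimFVS [Finite U] [Finite ι] [DecidableEq U] {α : ℕ}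
    {J : Fin α → Set ι} (hA : ∀ i, (A i).Nonempty) (hdisj : ∀ c, (J c).PairwiseDisjoint A)
    (hJ : ∀ i, ∃ c, i ∈ J c) :
    ∃ G : Fin α → SimpleGraph (U ⊕ ι × Bool), ∀ k : ℕ,
      (∃ S : Finset U, #S ≤ k ∧ ∀ i, (S ∩ A i).Nonempty) ↔
        ∃ T : Set (U ⊕ ι × Bool), T.ncard ≤ k ∧ IsSimFVS G T := by
  have hcard (i : ι) : 3 ≤ #(padded A i) := by
    have := (hA i).card_pos
    rw [card_padded]
    omega
  obtain ⟨G, hG⟩ := exists_isSimFVS_iff (fun c => pairwiseDisjoint_padded (hdisj c))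
    fun _ i _ => hcard i
  have hfvs (T : Set (U ⊕ ι × Bool)) : IsSimFVS G T ↔ ∀ i, ∃ x ∈ padded A i, x ∈ T := by
    refine (hG T).trans ⟨fun h i => ?_, fun h _ i _ => h i⟩
    obtain ⟨c, hc⟩ := hJ i
    exact h c i hc
  refine ⟨G, fun k => ?_⟩
  simpa only [hfvs] using exists_hitting_iff_exists_hitting_padded hA k

end Padding

theorem card_sum_prod_bool_le {U ι : Type*} [Fintype U] [Fintype ι] [Nonempty ι]
    (hU : 2 ≤ Fintype.card U) :
    Fintype.card (U ⊕ ι × Bool) ≤ 2 * Fintype.card U * Fintype.card ι := by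
  have hι : 1 ≤ Fintype.card ι := Fintype.card_pos
  rw [Fintype.card_sum, Fintype.card_prod, Fintype.card_bool]
  nlinarith

theorem partitionedHittingSet_to_simfvs_general {U : Type u} [Fintype U] [DecidableEq U] {α : ℕ}
    (Fam : Fin α → Finset (Finset U))
    (hne : ∀ f ∈ Finset.univ.biUnion Fam, f.Nonempty)
    (hdisj : ∀ i, (Fam i : Set (Finset U)).PairwiseDisjoint id) :
    ∃ (V : Type u) (_ : Fintype V) (G : Fin α → SimpleGraph V),
      Fintype.card V ≤ 2 * Fintype.card U * #(Finset.univ.biUnion Fam) ∧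
      ∀ k : ℕ, 1 ≤ k →
        ((∃ S : Finset U, #S ≤ k ∧ ∀ f ∈ Finset.univ.biUnion Fam, (S ∩ f).Nonempty) ↔
          ∃ T : Set V, T.ncard ≤ k ∧ IsSimFVS G T) := by
  set F := Finset.univ.biUnion Fam
  by_cases hone : ∃ S : Finset U, #S ≤ 1 ∧ ∀ f ∈ F, (S ∩ f).Nonempty
  · obtain ⟨S, hS, hSF⟩ := hone
    exact ⟨PEmpty, inferInstance, fun _ => ⊥, by simp, fun k hk =>
      ⟨fun _ => ⟨∅, by simp, fun _ => .of_subsingleton⟩, fun _ => ⟨S, hS.trans hk, hSF⟩⟩⟩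
  have hU : 2 ≤ Fintype.card U := by
    by_contra! hlt
    exact hone ⟨Finset.univ, Nat.le_of_lt_succ hlt, fun f hf => by simpa using hne f hf⟩
  have : Nonempty F := by
    by_contra! hempty
    exact hone ⟨∅, by simp, fun f hf => hempty.elim ⟨f, hf⟩⟩
  let J (i : Fin α) : Set F := {f | f.1 ∈ Fam i}
  have hJdisj (i : Fin α) : (J i).PairwiseDisjoint Subtype.val := fun f hf g hg hfg =>
    hdisj i hf hg (Subtype.coe_ne_coe.mpr hfg)
  have hJ (f : F) : ∃ i, f ∈ J i := by
    obtain ⟨i, -, hi⟩ := Finset.mem_biUnion.mp f.2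
    exact ⟨i, hi⟩
  obtain ⟨G, hG⟩ := exists_graph_forall_hitting_iff_isSimFVS (fun f : F => hne f f.2) hJdisj hJ
  refine ⟨U ⊕ F × Bool, inferInstance, G, ?_, fun k _ => ?_⟩
  · simpa only [Fintype.card_coe] using card_sum_prod_bool_le (ι := F) hU
  · simpa only [Subtype.forall] using hG k

/-- Combinatorial core of the reduction proving that O(log n)-SimFVS is W[1]-hard: given an
α-partitioned family `F = F_1 ∪ … ∪ F_α` of nonempty subsets of a finite universe `U`
covering `U`, where the sets within each subfamily `Fam i` are pairwise disjoint, there is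
an α-edge-colored graph `G` on at most `2|U|·|F|` vertices such that for every positive
integer `k`, `F` has a hitting set of size at most `k` iff `G` has an α-simultaneous
feedback vertex set of size at most `k`. -/
theorem partitionedHittingSet_to_simfvs {U : Type} [Fintype U] [DecidableEq U] {α : ℕ}
    (Fam : Fin α → Finset (Finset U))
    (hne : ∀ f ∈ Finset.univ.biUnion Fam, f.Nonempty)
    (hcov : ∀ u : U, ∃ f ∈ Finset.univ.biUnion Fam, u ∈ f)
    (hdisj : ∀ i, ∀ f ∈ Fam i, ∀ g ∈ Fam i, f ≠ g → Disjoint f g) :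
    ∃ (V : Type) (_ : Fintype V) (G : Fin α → SimpleGraph V),
      Fintype.card V ≤ 2 * Fintype.card U * (Finset.univ.biUnion Fam).card ∧
      ∀ k : ℕ, 1 ≤ k →
        ((∃ S : Finset U, S.card ≤ k ∧
            ∀ f ∈ Finset.univ.biUnion Fam, (S ∩ f).Nonempty) ↔
         (∃ T : Set V, T.ncard ≤ k ∧ IsSimFVS G T)) := by
  exact partitionedHittingSet_to_simfvs_general Fam hne hdisj
end

section
/- Let H and G be simple graphs with V(G) = {g_1, …, g_ℓ}, let col: V(H) → {1, …, ℓ} be a coloring, and for each i ∈ {1, …, ℓ} let H_i be the subgraph of H induced by the vertices of color i. Assume that G is connected with maximum degree 3, that each H_i is an edgeless graph (independent set) on exactly 2^t vertices for some positive integer t, and that whenever (g_i, g_j) ∉ E(G) there are no edges of H between H_i and H_j. Then there exist a finite universe U with |U| = |V(H)| + |E(H)| and a family F of subsets of U with |F| ≤ 4t·|E(G)| + |E(G)| + ℓ that can be partitioned into 16t + 1 subfamilies, each consisting of pairwise disjoint sets, such that: (i) F admits a hitting set of size at most ℓ + |E(G)| if and only if there exists an injection inj: V(G) → V(H) with col(inj(g_i))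 = i for every i ∈ {1, …, ℓ} and (inj(g_i), inj(g_j)) ∈ E(H) for every edge (g_i, g_j) ∈ E(G); and (ii) F admits no hitting set of size at most ℓ + |E(G)| − 1. (Combinatorial core of the reduction from Partitioned Subgraph Isomorphism proving W[1]-hardness of O(log(|U||F|))-Partitioned Hitting Set.) -/
open SimpleGraph

/-!
A solution must choose one vertex per color class and one edge of `H` per edge of `G`. The vertex
classes and the edge classes are `ℓ + |E(G)|` pairwise disjoint sets, so a hitting set of that size
picks exactly one element from each. Give the vertices of a color class distinct `t`-bit codes. For
a directed edge `(i, j)` of `G`, a bit position `b` and a value `v`, add the set of the vertices of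
color `i` whose bit `b` is `v` and the edges between `H_i` and `H_j` whose end of color `i` has
bit `b` different from `v`. If `x` is the end of color `i` of the chosen edge, then hitting the
sets with `v` the `b`-th bit of `x` forces the chosen vertex of color `i` to agree with `x` in
every bit, hence to be `x`.

Two bit sets for the same `b` and `v` can only meet if their directed edges share the tail or the
underlying edge, so a labeling of the directed edges that separates such pairs splits the bit sets
into disjoint subfamilies. Numbering the edges at each vertex and adding an orientation bit gives
such a labeling with `2d` labels when the maximum degree is `d`.
-/

section HittingSet

open scoped Function

variable {I K X : Type*}

/-- A finite hitting set of an indexed family of sets: it meets every member of the family. -/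
def IsHittingSet (S : Finset X) (A : I → Set X) : Prop :=
  ∀ a, (↑S ∩ A a).Nonempty

theorem IsHittingSet.exists_transversal {S : Finset X} {A : I → Set X}
    (hS : IsHittingSet S A) (hA : Pairwise (Disjoint on A)) :
    ∃ x : I → S, Function.Injective x ∧ ∀ a, ↑(x a) ∈ A a := by
  choose x hxS hxA using hS
  refine ⟨fun a => ⟨x a, hxS a⟩, fun a b hab => hA.eq fun hdisj => ?_, hxA⟩
  exact hdisj.ne_of_mem (hxA a) (hxA b) (congrArg Subtype.val hab)

theorem IsHittingSet.card_le_of_pairwise_disjoint {S : Finset X} {A : I → Set X}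
    (hS : IsHittingSet S A) (hA : Pairwise (Disjoint on A)) :
    Nat.card I ≤ S.card := by
  obtain ⟨x, hx, -⟩ := hS.exists_transversal hA
  simpa using Nat.card_le_card_of_injective x hx

theorem IsHittingSet.inter_subsingleton {S : Finset X} {A : I → Set X}
    (hS : IsHittingSet S A) (hA : Pairwise (Disjoint on A))
    (hcard : S.card ≤ Nat.card I) (a : I) : (↑S ∩ A a).Subsingleton := by
  obtain ⟨x, hx, hxA⟩ := hS.exists_transversal hA
  have hsurj := (hx.bijective_of_nat_card_le (by simpa using hcard)).surjective
  have eq_chosen (y : X) (hy : y ∈ ↑S ∩ A a) : y = x a := by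
    obtain ⟨b, hb⟩ := hsurj ⟨y, hy.1⟩
    obtain rfl : ↑(x b) = y := congrArg Subtype.val hb
    rw [hA.eq fun hdisj => hdisj.ne_of_mem (hxA b) hy.2 rfl]
  exact fun y hy z hz => (eq_chosen y hy).trans (eq_chosen z hz).symm

theorem exists_partition_of_disjoint {α : Type*} [PartialOrder α] [OrderBot α] [Finite K] {m : ℕ}
    [NeZero m] (hm : Nat.card K ≤ m) (A : I → α) (p : I → K)
    (hp : ∀ a b, a ≠ b → p a = p b → Disjoint (A a) (A b)) :
    ∃ part : α → Fin m, ∀ f ∈ Set.range A, ∀ g ∈ Set.range A,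
      f ≠ g → part f = part g → Disjoint f g := by
  cases isEmpty_or_nonempty I
  · exact ⟨fun _ => 0, by simp⟩
  let φ : K → Fin m := Fin.castLE hm ∘ Finite.equivFin K
  have hφ : Function.Injective φ := (Fin.castLE_injective hm).comp (Finite.equivFin K).injective
  refine ⟨φ ∘ p ∘ Function.invFun A, fun f hf g hg hne hpart => ?_⟩
  rw [← Function.invFun_eq hf, ← Function.invFun_eq hg] at hne ⊢
  exact hp _ _ (ne_of_apply_ne A hne) (hφ hpart)

theorem exists_finset_family_of_indexed_family [Finite I] [Finite K] [Finite X] {m : ℕ} [NeZero m]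
    (hm : Nat.card K ≤ m) (A : I → Set X) (p : I → K)
    (hp : ∀ a b, a ≠ b → p a = p b → Disjoint (A a) (A b)) :
    ∃ (U : Type) (_ : Fintype U) (_ : DecidableEq U) (Fam : Finset (Finset U)),
      Fintype.card U = Nat.card X ∧
      Fam.card ≤ Nat.card I ∧
      (∃ part : Finset U → Fin m,
        ∀ f ∈ Fam, ∀ g ∈ Fam, f ≠ g → part f = part g → Disjoint f g) ∧
      ∀ n : ℕ, (∃ S : Finset U, S.card ≤ n ∧ ∀ f ∈ Fam, (S ∩ f).Nonempty) ↔
        ∃ S : Finset X, S.card ≤ n ∧ IsHittingSet S A := by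
  classical
  have := Fintype.ofFinite I
  let e : X ≃ Fin (Nat.card X) := Finite.equivFin X
  let B : I → Finset (Fin (Nat.card X)) := fun a => {u | e.symm u ∈ A a}
  have hB (a b : I) (hne : a ≠ b) (hab : p a = p b) : Disjoint (B a) (B b) := by
    refine Finset.disjoint_left.2 fun u ha hb => ?_
    exact (hp a b hne hab).ne_of_mem (Finset.mem_filter.1 ha).2 (Finset.mem_filter.1 hb).2 rfl
  have hits_iff (S : Finset X) :
      (∀ f ∈ Finset.univ.image B, (S.map e.toEmbedding ∩ f).Nonempty) ↔ IsHittingSet S A := by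
    simp [IsHittingSet, B, Finset.Nonempty, Set.Nonempty, e.symm.surjective.exists]
  obtain ⟨part, hpart⟩ := exists_partition_of_disjoint hm B p hB
  refine ⟨Fin (Nat.card X), inferInstance, inferInstance, Finset.univ.image B, by simp, ?_,
    ⟨part, by simpa using hpart⟩, fun n => ?_⟩
  · simpa using Finset.card_image_le (s := Finset.univ) (f := B)
  · rw [← e.finsetCongr.exists_congr_right]
    simp only [Equiv.finsetCongr_apply, Finset.card_map, hits_iff]

theorem exists_injOn_fibers {α β κ : Type*} [Finite κ] (f : α → β)
    (hf : ∀ b, (f ⁻¹' {b}).encard ≤ ENat.card κ) :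
    ∃ c : α → κ, ∀ b, Set.InjOn c (f ⁻¹' {b}) := by
  cases isEmpty_or_nonempty κ
  · have hempty (b : β) : f ⁻¹' {b} = ∅ := by
      simpa [ENat.card_eq_coe_natCard] using hf b
    have : IsEmpty α := ⟨fun a => (hempty (f a)).subset rfl⟩
    exact ⟨isEmptyElim, fun _ a => isEmptyElim a⟩
  have exists_injOn (b : β) : ∃ c : α → κ, Set.InjOn c (f ⁻¹' {b}) := by
    have hfin : (f ⁻¹' {b}).Finite := Set.encard_lt_top_iff.1 ((hf b).trans_lt (by simp))
    obtain ⟨c, -, hc⟩ := hfin.exists_injOn_of_encard_le (t := (Set.univ : Set κ))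
      (by simpa using hf b)
    exact ⟨c, hc⟩
  choose c hc using exists_injOn
  refine ⟨fun a => c (f a) a, fun b => (hc b).congr ?_⟩
  rintro a rfl
  rfl

end HittingSet

section Lift

variable {V W : Type*} {H : SimpleGraph W} {G : SimpleGraph V} {col : W → V}

theorem encard_darts_fst_le (v : V) :
    ((fun a : G.Dart => a.fst) ⁻¹' {v}).encard ≤ (G.neighborSet v).encard := by
  refine Set.encard_le_encard_of_injOn (f := fun a => a.snd) ?_ ?_
  · rintro a rfl
    exact a.adj
  · intro a ha b hb hab
    exact Dart.ext _ _ (Prod.ext (ha.trans hb.symm) hab)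

instance finite_dart [Finite V] : Finite G.Dart :=
  .of_injective _ Dart.toProd_injective

theorem nat_card_dart [Finite V] : Nat.card G.Dart = 2 * G.edgeSet.ncard := by
  classical
  have := Fintype.ofFinite V
  rw [Nat.card_eq_fintype_card, G.dart_card_eq_twice_card_edges, ← G.coe_edgeFinset,
    Set.ncard_coe_finset]

theorem exists_dart_labeling {d : ℕ} (hdeg : ∀ v, (G.neighborSet v).encard ≤ d) :
    ∃ c : G.Dart → Fin d × Bool, ∀ a b, a ≠ b → c a = c b →
      a.fst ≠ b.fst ∧ a.edge ≠ b.edge := by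
  classical
  obtain ⟨c, hc⟩ : ∃ c : G.Dart → Fin d, ∀ v, Set.InjOn c ((fun a : G.Dart => a.fst) ⁻¹' {v}) :=
    exists_injOn_fibers _ fun v => by simpa using (encard_darts_fst_le v).trans (hdeg v)
  refine ⟨fun a => (c a, decide (WellOrderingRel a.fst a.snd)), fun a b hne hab =>
    ⟨fun hfst => hne (hc _ hfst rfl (Prod.ext_iff.1 hab).1), fun hedge => ?_⟩⟩
  obtain rfl : a = b.symm := ((dart_edge_eq_iff a b).1 hedge).resolve_left hne
  have horient : WellOrderingRel b.snd b.fst ↔ WellOrderingRel b.fst b.snd :=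
    decide_eq_decide.1 (Prod.ext_iff.1 hab).2
  rcases trichotomous_of WellOrderingRel b.fst b.snd with h | h | h
  · exact asymm h (horient.2 h)
  · exact b.fst_ne_snd h
  · exact asymm h (horient.1 h)

/-- A dart of `H` lies over a dart of `G` if the coloring maps its tail to the tail and its head
to the head. -/
def LiesOver (col : W → V) (a : H.Dart) (d : G.Dart) : Prop :=
  col a.fst = d.fst ∧ col a.snd = d.snd

theorem LiesOver.symm {a : H.Dart} {d : G.Dart} (h : LiesOver col a d) :
    LiesOver col a.symm d.symm :=
  ⟨h.2, h.1⟩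

theorem LiesOver.map_eq_edge {a : H.Dart} {d : G.Dart} {f : Sym2 W} (h : LiesOver col a d)
    (haf : a.edge = f) : f.map col = d.edge := by
  subst haf
  rw [Dart.edge, Dart.edge, Sym2.map_mk, h.1, h.2]

theorem LiesOver.eq_of_edge_eq {a b : H.Dart} {d : G.Dart} (ha : LiesOver col a d)
    (hb : LiesOver col b d) (hab : a.edge = b.edge) : a = b := by
  refine ((dart_edge_eq_iff a b).1 hab).resolve_right ?_
  rintro rfl
  exact d.fst_ne_snd (ha.1.symm.trans hb.2)

theorem exists_liesOver {d : G.Dart} (f : H.edgeSet) (hf : (f : Sym2 W).map col = d.edge) :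
    ∃ a : H.Dart, a.edge = f ∧ LiesOver col a d := by
  obtain ⟨⟨x, y⟩, hxy⟩ := f
  rcases dart_edge_eq_mk'_iff.1 hf.symm with h | h
  · exact ⟨⟨(x, y), hxy⟩, rfl, by simp [LiesOver, h]⟩
  · exact ⟨⟨(y, x), hxy.symm⟩, Sym2.eq_swap, by simp [LiesOver, h]⟩

end Lift

section Reduction

open scoped Function

variable {V W ι : Type*} (H : SimpleGraph W) (G : SimpleGraph V) (col : W → V)
  (code : W → ι → Bool)

/-- The sets forcing a hitting set to choose a vertex of each color and, for each edge of `G`, an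
edge of `H` over it. The universe `V(H) ∪ E(H)` is encoded as `W ⊕ H.edgeSet`. -/
def choiceSet : V ⊕ G.edgeSet → Set (W ⊕ H.edgeSet)
  | .inl i => Sum.inl '' {x | col x = i}
  | .inr e => Sum.inr '' {f | (f : Sym2 W).map col = e}

/-- The sets forcing the chosen vertex of color `d.fst` to agree, in bit `b` of its code, with the
end of that color of the chosen edge over `d`. -/
def consistencySet (d : G.Dart) (b : ι) (v : Bool) : Set (W ⊕ H.edgeSet) :=
  Sum.inl '' {x | col x = d.fst ∧ code x b = v} ∪
    Sum.inr '' {f | ∃ a : H.Dart, a.edge = f ∧ LiesOver col a d ∧ code a.fst b ≠ v}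

/-- The family of sets output by the reduction, indexed by the colors, the edges of `G`, and the
triples of a directed edge of `G`, a bit position and a bit value. -/
def reductionFamily : (V ⊕ G.edgeSet) ⊕ (G.Dart × ι × Bool) → Set (W ⊕ H.edgeSet) :=
  Sum.elim (choiceSet H G col) fun q => consistencySet H G col code q.1 q.2.1 q.2.2

variable {H G col code}

theorem pairwise_disjoint_choiceSet : Pairwise (Disjoint on choiceSet H G col) := by
  intro c c' hne
  rw [Function.onFun, Set.disjoint_left]
  rcases c with i | e <;> rcases c' with i' | e'
  · rintro _ ⟨x, rfl, rfl⟩ ⟨_, rfl, hx⟩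
    cases hx
    exact hne rfl
  · rintro _ ⟨x, -, rfl⟩ ⟨f, -, hf⟩
    cases hf
  · rintro _ ⟨f, -, rfl⟩ ⟨x, -, hx⟩
    cases hx
  · rintro _ ⟨f, hf, rfl⟩ ⟨_, hf', h⟩
    cases h
    exact hne (congrArg Sum.inr (Subtype.ext (hf.symm.trans hf')))

theorem disjoint_consistencySet {d d' : G.Dart} (hfst : d.fst ≠ d'.fst) (hedge : d.edge ≠ d'.edge)
    (b b' : ι) (v v' : Bool) :
    Disjoint (consistencySet H G col code d b v) (consistencySet H G col code d' b' v') := by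
  rw [Set.disjoint_left]
  rintro _ (⟨x, ⟨hx, -⟩, rfl⟩ | ⟨f, ⟨a, haf, had, -⟩, rfl⟩)
    (⟨_, ⟨hx', -⟩, h⟩ | ⟨_, ⟨a', ha'f, ha'd, -⟩, h⟩) <;> cases h
  · exact hfst (hx.symm.trans hx')
  · exact hedge ((had.map_eq_edge haf).symm.trans (ha'd.map_eq_edge ha'f))

theorem exists_reductionFamily_partition {κ : Type*} (c : G.Dart → κ)
    (hc : ∀ a b, a ≠ b → c a = c b → a.fst ≠ b.fst ∧ a.edge ≠ b.edge) :
    ∃ p : (V ⊕ G.edgeSet) ⊕ (G.Dart × ι × Bool) → Option (κ × ι × Bool),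
      ∀ q r, q ≠ r → p q = p r →
        Disjoint (reductionFamily H G col code q) (reductionFamily H G col code r) := by
  refine ⟨Sum.elim (fun _ => none) fun q => some (c q.1, q.2), ?_⟩
  rintro (i | ⟨d, b, v⟩) (j | ⟨d', b', v'⟩) hne hp
  · exact pairwise_disjoint_choiceSet fun h => hne (congrArg Sum.inl h)
  · cases hp
  · cases hp
  · obtain ⟨hlabel, rfl, rfl⟩ : c d = c d' ∧ b = b' ∧ v = v' := by simpa using hp
    obtain ⟨hfst, hedge⟩ := hc d d' (by rintro rfl; exact hne rfl) hlabel
    exact disjoint_consistencySet hfst hedge b b v v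

theorem card_le_of_isHittingSet_reductionFamily [Finite V] {S : Finset (W ⊕ H.edgeSet)}
    (hS : IsHittingSet S (reductionFamily H G col code)) :
    Nat.card V + G.edgeSet.ncard ≤ S.card := by
  have hchoice : IsHittingSet S (choiceSet H G col) := fun c => hS (.inl c)
  simpa using hchoice.card_le_of_pairwise_disjoint pairwise_disjoint_choiceSet

theorem fst_eq_of_isHittingSet (hcode : ∀ i, Set.InjOn code (col ⁻¹' {i}))
    {S : Finset (W ⊕ H.edgeSet)} (hS : IsHittingSet S (reductionFamily H G col code))
    (hunique : ∀ c, (↑S ∩ choiceSet H G col c).Subsingleton)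
    {d : G.Dart} {a : H.Dart} {f : H.edgeSet} (haf : a.edge = f) (hfS : Sum.inr f ∈ S)
    (had : LiesOver col a d) {w : W} (hwS : Sum.inl w ∈ S) (hw : col w = d.fst) :
    a.fst = w := by
  refine hcode d.fst had.1 hw (funext fun b => ?_)
  obtain ⟨_, huS, ⟨x, ⟨hx, hxb⟩, rfl⟩ | ⟨g, ⟨a', ha'g, ha'd, ha'b⟩, rfl⟩⟩ :=
    hS (.inr (d, b, code a.fst b))
  · obtain rfl : x = w :=
      Sum.inl_injective (hunique (.inl d.fst) ⟨huS, x, hx, rfl⟩ ⟨hwS, w, hw, rfl⟩)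
    exact hxb.symm
  · obtain rfl : g = f := Sum.inr_injective <| hunique (.inr ⟨d.edge, d.edge_mem⟩)
      ⟨huS, g, ha'd.map_eq_edge ha'g, rfl⟩ ⟨hfS, f, had.map_eq_edge haf, rfl⟩
    obtain rfl := had.eq_of_edge_eq ha'd (haf.trans ha'g.symm)
    exact absurd rfl ha'b

theorem exists_hom_of_isHittingSet [Finite V] (hcode : ∀ i, Set.InjOn code (col ⁻¹' {i}))
    {S : Finset (W ⊕ H.edgeSet)} (hS : IsHittingSet S (reductionFamily H G col code))
    (hcard : S.card ≤ Nat.card V + G.edgeSet.ncard) : ∃ φ : G →g H, ∀ i, col (φ i) = i := by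
  have hchoice : IsHittingSet S (choiceSet H G col) := fun c => hS (.inl c)
  have hunique := hchoice.inter_subsingleton pairwise_disjoint_choiceSet (by simpa using hcard)
  have exists_vertex (i : V) : ∃ x, Sum.inl x ∈ S ∧ col x = i := by
    obtain ⟨_, hxS, x, hx, rfl⟩ := hchoice (.inl i)
    exact ⟨x, hxS, hx⟩
  choose x hxS hx using exists_vertex
  refine ⟨⟨x, fun {i j} hij => ?_⟩, hx⟩
  let d : G.Dart := ⟨(i, j), hij⟩
  obtain ⟨_, hfS, f, hf, rfl⟩ := hchoice (.inr ⟨d.edge, d.edge_mem⟩)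
  obtain ⟨a, haf, had⟩ := exists_liesOver f hf
  have hfst : a.fst = x i := fst_eq_of_isHittingSet hcode hS hunique haf hfS had (hxS i) (hx i)
  have hsnd : a.snd = x j := fst_eq_of_isHittingSet hcode hS hunique
    (a.edge_symm.trans haf) hfS had.symm (hxS j) (hx j)
  exact hfst ▸ hsnd ▸ a.adj

theorem exists_isHittingSet_of_hom [Finite V] (φ : G →g H) (hφ : ∀ i, col (φ i) = i) :
    ∃ S : Finset (W ⊕ H.edgeSet), S.card ≤ Nat.card V + G.edgeSet.ncard ∧
      IsHittingSet S (reductionFamily H G col code) := by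
  classical
  have := Fintype.ofFinite (V ⊕ G.edgeSet)
  let select : V ⊕ G.edgeSet → W ⊕ H.edgeSet := Sum.map φ φ.mapEdgeSet
  have hselect (c : V ⊕ G.edgeSet) : select c ∈ (↑(Finset.univ.image select) : Set _) := by simp
  refine ⟨Finset.univ.image select, ?_, ?_⟩
  · refine Finset.card_image_le.trans_eq ?_
    rw [Finset.card_univ, ← Nat.card_eq_fintype_card, Nat.card_sum, Nat.card_coe_set_eq]
  · rintro ((i | e) | ⟨d, b, v⟩)
    · exact ⟨_, hselect (.inl i), φ i, hφ i, rfl⟩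
    · refine ⟨_, hselect (.inr e), φ.mapEdgeSet e, ?_, rfl⟩
      calc (Sym2.map φ e).map col = Sym2.map (col ∘ φ) e := Sym2.map_map ..
        _ = e := by rw [show col ∘ φ = id from funext hφ, Sym2.map_id, id]
    · by_cases hv : code (φ d.fst) b = v
      · exact ⟨_, hselect (.inl d.fst), .inl ⟨φ d.fst, ⟨hφ _, hv⟩, rfl⟩⟩
      · exact ⟨_, hselect (.inr ⟨d.edge, d.edge_mem⟩),
          .inr ⟨_, ⟨φ.mapDart d, rfl, ⟨hφ _, hφ _⟩, hv⟩, rfl⟩⟩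

end Reduction

theorem exists_bit_code {V W : Type*} [Finite W] {t : ℕ} (col : W → V)
    (hsize : ∀ i, (col ⁻¹' {i}).ncard ≤ 2 ^ t) :
    ∃ code : W → Fin t → Bool, ∀ i, Set.InjOn code (col ⁻¹' {i}) := by
  refine exists_injOn_fibers col fun i => ?_
  rw [← (Set.toFinite _).cast_ncard_eq, ENat.card_eq_coe_natCard, Nat.cast_le]
  simpa using hsize i

theorem psi_to_partitionedHittingSet_general {V W : Type*} [Finite V] [Finite W] {d t : ℕ}
    (H : SimpleGraph W) (G : SimpleGraph V) (col : W → V)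
    (hdeg : ∀ v, (G.neighborSet v).ncard ≤ d)
    (hsize : ∀ i, {x | col x = i}.ncard ≤ 2 ^ t) :
    ∃ (U : Type) (_ : Fintype U) (_ : DecidableEq U) (Fam : Finset (Finset U)),
      Fintype.card U = Nat.card W + H.edgeSet.ncard ∧
      Fam.card ≤ 4 * t * G.edgeSet.ncard + G.edgeSet.ncard + Nat.card V ∧
      (∃ part : Finset U → Fin (4 * d * t + 1),
        ∀ f ∈ Fam, ∀ g ∈ Fam, f ≠ g → part f = part g → Disjoint f g) ∧
      ((∃ S : Finset U, S.card ≤ Nat.card V + G.edgeSet.ncard ∧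
          ∀ f ∈ Fam, (S ∩ f).Nonempty) ↔
        (∃ inj : V → W, Function.Injective inj ∧ (∀ i, col (inj i) = i) ∧
          ∀ i j, G.Adj i j → H.Adj (inj i) (inj j))) ∧
      ∀ n < Nat.card V + G.edgeSet.ncard,
        ¬ ∃ S : Finset U, S.card ≤ n ∧ ∀ f ∈ Fam, (S ∩ f).Nonempty := by
  obtain ⟨code, hcode⟩ := exists_bit_code col hsize
  obtain ⟨c, hc⟩ := exists_dart_labeling (G := G) (d := d) fun v => by
    rw [← (Set.toFinite _).cast_ncard_eq]
    exact_mod_cast hdeg v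
  obtain ⟨p, hp⟩ := exists_reductionFamily_partition (H := H) (col := col) (code := code) c hc
  have hlabels : Nat.card (Option ((Fin d × Bool) × Fin t × Bool)) = 4 * d * t + 1 := by
    simp only [Nat.card_eq_fintype_card, Fintype.card_option, Fintype.card_prod, Fintype.card_fin,
      Fintype.card_bool]
    ring
  obtain ⟨U, iF, iD, Fam, hU, hFam, hpart, hhit⟩ := exists_finset_family_of_indexed_family
    hlabels.le (reductionFamily H G col code) p hp
  refine ⟨U, iF, iD, Fam, ?_, ?_, hpart, (hhit _).trans ⟨?_, ?_⟩, fun n hn => ?_⟩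
  · rw [hU, Nat.card_sum, Nat.card_coe_set_eq]
  · refine hFam.trans_eq ?_
    simp only [Nat.card_sum, Nat.card_prod, nat_card_dart, Nat.card_coe_set_eq,
      Nat.card_eq_fintype_card, Fintype.card_prod, Fintype.card_fin, Fintype.card_bool]
    ring
  · rintro ⟨S, hScard, hS⟩
    obtain ⟨φ, hφ⟩ := exists_hom_of_isHittingSet hcode hS hScard
    exact ⟨φ, Function.LeftInverse.injective hφ, hφ, fun _ _ => φ.map_adj⟩
  · rintro ⟨x, -, hx, hadj⟩
    exact exists_isHittingSet_of_hom ⟨x, hadj _ _⟩ hx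
  · rw [hhit]
    rintro ⟨S, hScard, hS⟩
    exact hn.not_ge ((card_le_of_isHittingSet_reductionFamily hS).trans hScard)

/-- Combinatorial core of the reduction from Partitioned Subgraph Isomorphism proving
W[1]-hardness of O(log(|U||F|))-Partitioned Hitting Set.  Given graphs `H` (on vertex type
`W` with a coloring `col : W → Fin ℓ`) and `G` (on `Fin ℓ`), with `G` connected of maximum
degree 3, each color class `H_i = col⁻¹ i` an independent set of exactly `2^t` vertices, and
no `H`-edges between color classes `i, j` unless `(g_i, g_j) ∈ E(G)`, there exist a universe
`U` with `|U| = |V(H)| + |E(H)|` and a family `Fam` of subsets of `U` with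
`|Fam| ≤ 4t|E(G)| + |E(G)| + ℓ`, partitioned into `16t + 1` subfamilies of pairwise
disjoint sets, such that (i) `Fam` admits a hitting set of size at most `ℓ + |E(G)|` iff the
PSI instance has a colorful solution, and (ii) `Fam` admits no hitting set of size at most
`ℓ + |E(G)| − 1`. -/
theorem psi_to_partitionedHittingSet {W : Type*} [Fintype W] {ℓ t : ℕ} (ht : 1 ≤ t)
    (H : SimpleGraph W) (G : SimpleGraph (Fin ℓ)) (col : W → Fin ℓ)
    (hconn : G.Connected)
    (hdeg : ∀ v : Fin ℓ, (G.neighborSet v).ncard ≤ 3)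
    (hsize : ∀ i : Fin ℓ, {x : W | col x = i}.ncard = 2 ^ t)
    (hind : ∀ x y : W, col x = col y → ¬ H.Adj x y)
    (hedge : ∀ x y : W, ¬ G.Adj (col x) (col y) → ¬ H.Adj x y) :
    ∃ (U : Type) (_ : Fintype U) (_ : DecidableEq U) (Fam : Finset (Finset U)),
      Fintype.card U = Fintype.card W + H.edgeSet.ncard ∧
      Fam.card ≤ 4 * t * G.edgeSet.ncard + G.edgeSet.ncard + ℓ ∧
      (∃ part : Finset U → Fin (16 * t + 1),
        ∀ f ∈ Fam, ∀ g ∈ Fam, f ≠ g → part f = part g → Disjoint f g) ∧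
      ((∃ S : Finset U, S.card ≤ ℓ + G.edgeSet.ncard ∧
          ∀ f ∈ Fam, (S ∩ f).Nonempty) ↔
        (∃ inj : Fin ℓ → W, Function.Injective inj ∧ (∀ i, col (inj i) = i) ∧
          ∀ i j, G.Adj i j → H.Adj (inj i) (inj j))) ∧
      ¬ (∃ S : Finset U, S.card ≤ ℓ + G.edgeSet.ncard - 1 ∧
          ∀ f ∈ Fam, (S ∩ f).Nonempty) := by
  have : 0 < ℓ := Fin.pos_iff_nonempty.2 hconn.nonempty
  obtain ⟨U, iF, iD, Fam, hU, hFam, ⟨part, hpart⟩, hiff, hmin⟩ :=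
    psi_to_partitionedHittingSet_general H G col hdeg fun i => (hsize i).le
  simp only [Nat.card_eq_fintype_card, Fintype.card_fin] at hU hFam hiff hmin
  exact ⟨U, iF, iD, Fam, hU, hFam, ⟨Fin.castLE (by omega) ∘ part, fun f hf g hg hne h =>
    hpart f hf g hg hne (Fin.castLE_injective _ h)⟩, hiff, hmin _ (by omega)⟩
end
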